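/- arXiv:1804.04319 — 3 statements merged into one kernel-verified Lean document; each statement's English description precedes it below -/
import Mathlib

section
/- Fix t ≥ 1. There exist positive real constants C and c such that for every N ∈ L_t^+, the group ε(N) := {γ ∈ GL_t(ℤ) : γNγᵀ = N} is finite and its cardinality satisfies |ε(N)| ≤ C·det(N)^{c}. -/
open Matrix

/-- A real matrix has integer entries. -/
def IsIntegerMatrix {ι κ : Type*} (A : Matrix ι κ ℝ) : Prop :=
  ∀ i j, ∃ z : ℤ, A i j = z

/-- A real square matrix is half-integral: integer diagonal and its double integral. -/
def IsHalfIntegral {ι : Type*} (A : Matrix ι ι ℝ) : Prop :=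
  (∀ i, ∃ z : ℤ, A i i = z) ∧ ∀ i j, ∃ z : ℤ, 2 * A i j = z

/-- Membership in `L_t^+`: positive definite half-integral symmetric real matrices. -/
def LPlus {ι : Type*} [Fintype ι] (A : Matrix ι ι ℝ) : Prop :=
  A.IsSymm ∧ A.PosDef ∧ IsHalfIntegral A

/-- The automorphism group `ε(N) = {γ ∈ GL_t(ℤ) : γNγᵀ = N}` of `N`. -/
def unitGroup (t : ℕ) (N : Matrix (Fin t) (Fin t) ℝ) : Set (Matrix (Fin t) (Fin t) ℝ) :=
  {γ | IsIntegerMatrix γ ∧ (γ.det = 1 ∨ γ.det = -1) ∧ γ * N * γᵀ = N}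

open scoped MatrixOrder Matrix.Norms.L2Operator in
theorem exists_factor {t : ℕ} {N : Matrix (Fin t) (Fin t) ℝ} (hN : N.PosDef) :
    ∃ B : Matrix (Fin t) (Fin t) ℝ, IsUnit B.det ∧ N = Bᵀ * B := by
  obtain ⟨B, hB⟩ := CStarAlgebra.nonneg_iff_eq_star_mul_self.mp hN.posSemidef.nonneg
  have h : N = Bᵀ * B := by
    rw [hB, star_eq_conjTranspose, conjTranspose_eq_transpose_of_trivial]
  refine ⟨B, ?_, h⟩
  have := hN.det_pos
  rw [h, det_mul, det_transpose] at this
  exact isUnit_iff_ne_zero.mpr (fun h0 => by simp [h0] at this)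

theorem exists_bound {t : ℕ} {N : Matrix (Fin t) (Fin t) ℝ} (hN : N.PosDef) :
    ∃ M : ℝ, ∀ γ : Matrix (Fin t) (Fin t) ℝ, γ * N * γᵀ = N → ∀ i j, |γ i j| ≤ M := by
  obtain ⟨B, hu, rfl⟩ := exists_factor hN
  have hu' : IsUnit Bᵀ.det := by rwa [det_transpose]
  refine ⟨∑ i, ∑ j, ∑ k, ∑ l, |B⁻¹ i k| * |B l j|, fun γ hγ i j => ?_⟩
  have hO : B * γᵀ * B⁻¹ ∈ Matrix.unitaryGroup (Fin t) ℝ := by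
    rw [mem_unitaryGroup_iff', star_eq_conjTranspose, conjTranspose_eq_transpose_of_trivial]
    simp only [transpose_mul, transpose_transpose, transpose_nonsing_inv]
    calc (Bᵀ)⁻¹ * (γ * Bᵀ) * (B * γᵀ * B⁻¹) = (Bᵀ)⁻¹ * (γ * (Bᵀ * B) * γᵀ) * B⁻¹ := by
          simp only [Matrix.mul_assoc]
      _ = 1 := by
          rw [hγ, ← Matrix.mul_assoc, nonsing_inv_mul _ hu', Matrix.one_mul, mul_nonsing_inv _ hu]
  set O := B * γᵀ * B⁻¹ with hOdef
  have hγO : γᵀ = B⁻¹ * (O * B) := by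
    rw [hOdef, Matrix.mul_assoc, nonsing_inv_mul _ hu, Matrix.mul_one, ← Matrix.mul_assoc,
      nonsing_inv_mul _ hu, Matrix.one_mul]
  have h1 : γ i j = ∑ k, ∑ l, B⁻¹ j k * (O k l * B l i) := by
    rw [← transpose_apply γ, hγO]
    simp only [mul_apply, Finset.mul_sum]
  have h2 : |γ i j| ≤ ∑ k, ∑ l, |B⁻¹ j k| * |B l i| := by
    rw [h1]
    refine (Finset.abs_sum_le_sum_abs _ _).trans (Finset.sum_le_sum fun k _ => ?_)
    refine (Finset.abs_sum_le_sum_abs _ _).trans (Finset.sum_le_sum fun l _ => ?_)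
    rw [abs_mul, abs_mul]
    have := entry_norm_bound_of_unitary hO k l
    rw [Real.norm_eq_abs] at this
    have h3 := mul_le_mul_of_nonneg_right this (abs_nonneg (B l i))
    rw [one_mul] at h3
    exact mul_le_mul_of_nonneg_left h3 (abs_nonneg _)
  refine h2.trans ?_
  refine (Finset.single_le_sum (f := fun i => ∑ k, ∑ l, |B⁻¹ j k| * |B l i|)
    (fun _ _ => by positivity) (Finset.mem_univ i)).trans ?_
  exact Finset.single_le_sum (f := fun j => ∑ i, ∑ k, ∑ l, |B⁻¹ j k| * |B l i|)
    (fun _ _ => by positivity) (Finset.mem_univ j)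

theorem cube_one {t : ℕ} (A : Matrix (Fin t) (Fin t) ℤ) (h : (1 + (3:ℤ) • A) ^ 3 = 1) :
    A = 0 := by
  have h1 : (9:ℤ) • (A * (1 + (3:ℤ) • (A + A * A))) = 0 := by
    have : (9:ℤ) • (A * (1 + (3:ℤ) • (A + A * A))) = (1 + (3:ℤ) • A) ^ 3 - 1 := by
      simp only [zsmul_eq_mul]
      push_cast
      noncomm_ring
    rw [this, h, sub_self]
  have h2 : A * (1 + (3:ℤ) • (A + A * A)) = 0 := by
    ext i j
    have := congrFun (congrFun h1 i) j
    simp only [Matrix.smul_apply, Matrix.zero_apply, smul_eq_mul] at this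
    simpa using this
  set D := (1 + (3:ℤ) • (A + A * A)) with hD
  have hdet : D.det ≠ 0 := by
    intro h0
    have h3 := (Int.castRingHom (ZMod 3)).map_det D
    rw [h0, map_zero] at h3
    have h4 : (Int.castRingHom (ZMod 3)).mapMatrix D = 1 := by
      rw [hD, map_add, map_one, map_zsmul]
      have h3' : (3 : ZMod 3) = 0 := by decide
      have : ∀ Y : Matrix (Fin t) (Fin t) (ZMod 3), (3:ℤ) • Y = 0 := by
        intro Y
        ext i j
        rw [Matrix.smul_apply, zsmul_eq_mul]
        push_cast
        rw [h3', zero_mul, Matrix.zero_apply]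
      rw [this, add_zero]
    rw [h4, det_one] at h3
    exact absurd h3 (by decide)
  have h5 : D.det • A = 0 := by
    calc D.det • A = A * D * D.adjugate := by
          rw [Matrix.mul_assoc, mul_adjugate, Matrix.mul_smul, Matrix.mul_one]
      _ = 0 := by rw [h2, Matrix.zero_mul]
  ext i j
  have := congrFun (congrFun h5 i) j
  simp only [Matrix.smul_apply, Matrix.zero_apply, smul_eq_mul] at this
  simpa [hdet] using this

theorem pow_form {t : ℕ} (A : Matrix (Fin t) (Fin t) ℤ) (m : ℕ) (hA : A ≠ 0) :
    ∃ A' : Matrix (Fin t) (Fin t) ℤ, A' ≠ 0 ∧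
      (1 + (3:ℤ) • A) ^ (3 ^ m) = 1 + (3 ^ (m + 1) : ℤ) • A' := by
  induction m with
  | zero => exact ⟨A, hA, by simp⟩
  | succ m ih =>
    obtain ⟨X, hX, h⟩ := ih
    set c : ℤ := 3 ^ m with hc
    have hc0 : c ≠ 0 := by positivity
    have e : (3 ^ (m + 1) : ℤ) • X = (3:ℤ) • (c • X) := by
      rw [smul_smul, hc, pow_succ, mul_comm]
    refine ⟨X + (3 * c) • (X * X) + (3 * c * c) • (X * X * X), ?_, ?_⟩
    · intro h0
      have hY : c • X = 0 := by
        apply cube_one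
        have : (1 + (3:ℤ) • (c • X)) ^ 3 = 1 + (9 * c) • (X + (3 * c) • (X * X) + (3 * c * c) • (X * X * X)) := by
          have hcc := (Int.cast_commute c X).eq
          simp only [pow_succ, pow_zero, one_mul, mul_add, add_mul, mul_one, smul_mul_assoc,
            mul_smul_comm, smul_smul, smul_add, Matrix.mul_assoc]
          module
        rw [this, h0, smul_zero, add_zero]
      exact hX ((smul_eq_zero.mp hY).resolve_left hc0)
    · rw [pow_succ 3 m, pow_mul, h, e]
      have : (3 ^ (m + 1 + 1) : ℤ) = 9 * c := by rw [hc]; ring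
      rw [this]
      simp only [pow_succ, pow_zero, one_mul, mul_add, add_mul, mul_one, smul_mul_assoc,
        mul_smul_comm, smul_smul, smul_add, Matrix.mul_assoc]
      module

/-- The real matrix of an integer matrix. -/
abbrev toR {t : ℕ} (g : Matrix (Fin t) (Fin t) ℤ) : Matrix (Fin t) (Fin t) ℝ :=
  (Int.castRingHom ℝ).mapMatrix g

theorem eq_one_of_mod {t : ℕ} {N : Matrix (Fin t) (Fin t) ℝ} (hN : N.PosDef)
    (g : Matrix (Fin t) (Fin t) ℤ) (hg : toR g * N * (toR g)ᵀ = N)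
    (h3 : (Int.castRingHom (ZMod 3)).mapMatrix g = 1) : g = 1 := by
  obtain ⟨M, hM⟩ := exists_bound hN
  have hdiv : ∀ i j, (3:ℤ) ∣ (g - 1) i j := by
    intro i j
    have h4 : (Int.castRingHom (ZMod 3)).mapMatrix (g - 1) = 0 := by
      rw [map_sub, h3, map_one, sub_self]
    have := congrFun (congrFun h4 i) j
    exact (ZMod.intCast_zmod_eq_zero_iff_dvd _ 3).mp this
  choose A hA using hdiv
  have hgA : g = 1 + (3:ℤ) • (Matrix.of A) := by
    ext i j
    have := hA i j
    simp only [Matrix.sub_apply] at this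
    simp only [Matrix.add_apply, Matrix.smul_apply, of_apply, smul_eq_mul]
    linarith
  by_contra hne
  have hA0 : Matrix.of A ≠ 0 := by
    intro h0
    rw [h0, smul_zero, add_zero] at hgA
    exact hne hgA
  have hpow : ∀ n : ℕ, toR (g ^ n) * N * (toR (g ^ n))ᵀ = N := by
    intro n
    induction n with
    | zero => simp
    | succ n ih =>
      rw [pow_succ, toR, map_mul, transpose_mul]
      calc _ = toR (g ^ n) * (toR g * N * (toR g)ᵀ) * (toR (g ^ n))ᵀ := by
            simp only [Matrix.mul_assoc]
        _ = N := by rw [hg, ih]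
  obtain ⟨m, hm⟩ := exists_nat_gt (M + 1)
  obtain ⟨X, hX, hXe⟩ := pow_form (Matrix.of A) m hA0
  rw [← hgA] at hXe
  obtain ⟨i, j, hij⟩ : ∃ i j, X i j ≠ 0 := by
    by_contra! hh
    exact hX (by ext i j; simpa using hh i j)
  have hb := hM _ (hpow (3 ^ m)) i j
  have hval : toR (g ^ 3 ^ m) i j = (((1 : Matrix (Fin t) (Fin t) ℤ) i j + 3 ^ (m+1) * X i j : ℤ) : ℝ) := by
    rw [hXe]; simp only [toR, RingHom.mapMatrix_apply, map_apply, Matrix.add_apply, Matrix.smul_apply, smul_eq_mul]; rfl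
  rw [hval] at hb
  have hone : |(1 : Matrix (Fin t) (Fin t) ℤ) i j| ≤ 1 := by
    rw [one_apply]; split_ifs <;> simp
  have hbig : (3:ℤ) ^ (m+1) ≤ |(1 : Matrix (Fin t) (Fin t) ℤ) i j + 3 ^ (m+1) * X i j| + 1 := by
    have h5 : (3:ℤ)^(m+1) ≤ |3 ^ (m+1) * X i j| := by
      rw [abs_mul, abs_of_pos (by positivity : (0:ℤ) < 3 ^ (m+1))]
      exact le_mul_of_one_le_right (by positivity) (Int.one_le_abs hij)
    have h6 := abs_sub ((1 : Matrix (Fin t) (Fin t) ℤ) i j + 3 ^ (m+1) * X i j) ((1 : Matrix (Fin t) (Fin t) ℤ) i j)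
    rw [add_sub_cancel_left] at h6
    linarith
  have hbig' : (3:ℝ) ^ (m+1) ≤ |(((1 : Matrix (Fin t) (Fin t) ℤ) i j + 3 ^ (m+1) * X i j : ℤ) : ℝ)| + 1 := by
    exact_mod_cast hbig
  have h7 : (m:ℝ) < 3 ^ (m+1) := by
    have : m < 3 ^ (m+1) := (Nat.lt_pow_self (by norm_num)).trans (Nat.pow_lt_pow_right (by norm_num) (Nat.lt_succ_self m))
    exact_mod_cast this
  linarith

theorem inj_mod {t : ℕ} {N : Matrix (Fin t) (Fin t) ℝ} (hN : N.PosDef)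
    (g d : Matrix (Fin t) (Fin t) ℤ) (hg : toR g * N * (toR g)ᵀ = N)
    (hd : toR d * N * (toR d)ᵀ = N) (hdu : IsUnit d.det)
    (h3 : (Int.castRingHom (ZMod 3)).mapMatrix g = (Int.castRingHom (ZMod 3)).mapMatrix d) :
    g = d := by
  have hdi : d * d⁻¹ = 1 := mul_nonsing_inv _ hdu
  have hid : d⁻¹ * d = 1 := nonsing_inv_mul _ hdu
  have hR : toR d⁻¹ * toR d = 1 := by rw [toR, toR, ← map_mul, hid, map_one]
  have hinv : toR d⁻¹ * N * (toR d⁻¹)ᵀ = N := by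
    conv_lhs => rw [← hd]
    calc _ = (toR d⁻¹ * toR d) * N * (toR d⁻¹ * toR d)ᵀ := by
          simp only [Matrix.mul_assoc, transpose_mul]
      _ = N := by rw [hR]; simp
  have h1 : g * d⁻¹ = 1 := by
    apply eq_one_of_mod hN
    · rw [toR, map_mul, transpose_mul]
      calc _ = toR g * (toR d⁻¹ * N * (toR d⁻¹)ᵀ) * (toR g)ᵀ := by
            simp only [Matrix.mul_assoc]
        _ = N := by rw [hinv, hg]
    · rw [map_mul, h3, ← map_mul, hdi, map_one]
  calc g = g * (d⁻¹ * d) := by rw [hid, mul_one]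
    _ = d := by rw [← mul_assoc, h1, one_mul]

theorem det_lower {t : ℕ} {N : Matrix (Fin t) (Fin t) ℝ} (hN : LPlus N) :
    1 ≤ 2 ^ t * N.det := by
  obtain ⟨-, hp, -, hh⟩ := hN
  choose Z hZ using hh
  have h1 : toR (Matrix.of Z) = (2:ℝ) • N := by
    ext i j
    simp [toR, hZ]
  have h2 : ((Matrix.of Z).det : ℝ) = 2 ^ t * N.det := by
    have := (Int.castRingHom ℝ).map_det (Matrix.of Z)
    change _ = (toR (Matrix.of Z)).det at this
    rw [h1, det_smul, Fintype.card_fin] at this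
    exact this
  have h3 : 0 < 2 ^ t * N.det := mul_pos (by positivity) hp.det_pos
  rw [← h2] at h3 ⊢
  exact_mod_cast h3

/-- there are constants `C, c > 0` such that for every `N ∈ L_t^+` the
group `ε(N)` is finite with `|ε(N)| ≤ C·det(N)^c`. -/
theorem unitGroup_finite_card_le {t : ℕ} (ht : 1 ≤ t) :
    ∃ C c : ℝ, 0 < C ∧ 0 < c ∧
      ∀ N : Matrix (Fin t) (Fin t) ℝ, LPlus N →
        (unitGroup t N).Finite ∧ ((unitGroup t N).ncard : ℝ) ≤ C * N.det ^ c := by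
  refine ⟨Nat.card (Matrix (Fin t) (Fin t) (ZMod 3)) * 2 ^ t, 1, ?_, one_pos, fun N hN => ?_⟩
  · have : 0 < Nat.card (Matrix (Fin t) (Fin t) (ZMod 3)) := Nat.card_pos
    positivity
  have hlift : ∀ γ : unitGroup t N, ∃ g : Matrix (Fin t) (Fin t) ℤ, toR g = γ.1 ∧ IsUnit g.det := by
    rintro ⟨γ, hi, hd, -⟩
    have hi' := hi
    choose g hg using hi'
    have h1 : toR (Matrix.of g) = γ := by
      ext i j
      simp [toR, hg]
    refine ⟨Matrix.of g, h1, ?_⟩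
    have h2 := (Int.castRingHom ℝ).map_det (Matrix.of g)
    change _ = (toR (Matrix.of g)).det at h2
    rw [h1] at h2
    have hd := hd
    rw [← h2] at hd
    simp only [eq_intCast] at hd
    rw [Int.isUnit_iff]
    exact_mod_cast hd
  choose L hL hU using hlift
  have hinj : Function.Injective (fun γ => (Int.castRingHom (ZMod 3)).mapMatrix (L γ)) := by
    intro a b hab
    have := inj_mod hN.2.1 (L a) (L b) (by rw [hL]; exact a.2.2.2) (by rw [hL]; exact b.2.2.2) (hU b) hab
    apply Subtype.ext
    rw [← hL a, ← hL b, this]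
  have hfin : Finite (unitGroup t N) := Finite.of_injective _ hinj
  refine ⟨Set.toFinite _, ?_⟩
  have hcard := Nat.card_le_card_of_injective _ hinj
  rw [Real.rpow_one, ← Nat.card_coe_set_eq, mul_assoc]
  have h1 : (Nat.card (unitGroup t N) : ℝ) ≤ Nat.card (Matrix (Fin t) (Fin t) (ZMod 3)) := by
    exact_mod_cast hcard
  exact h1.trans (le_mul_of_one_le_right (by positivity) (det_lower hN))
end

section
/- Let m ≥ 1, t ≥ 1, r ≥ 1 and let M ∈ L_r^+. Let R₂ be an integer t×r matrix and let R₁, R̃₁ be integer m×r matrices. Let τ₁ be a complex symmetric m×m matrix whose imaginary part v₁ := Im(τ₁) is positive definite, and let z'₁ be a complex m×t matrix with y'₁ := Im(z'₁). For an integer m×r matrix R and z ∈ ℂ^{m×r} define ϑ_{M,R}(τ₁,z) := ∑ exp(2πi·((1/4)Tr(pM⁻¹pᵀτ₁) + Tr(pzᵀ))), the sum over all integer m×r matrices p with p - R = X·(2M) for some integer m×r matrix X; and define ϑ_{M,R₂,R}(τ₁,z'₁,z'₂) := ϑ_{M,R}(τ₁, (1/2)z'₁R₂M⁻¹ + z'₂).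 Then, parametrizing z'₂ = τ₁a + b with a, b real m×r matrices (so that Im(z'₂) = v₁a), one has: the integral over (a,b) ∈ [0,1]^{m×r} × [0,1]^{m×r} (with Lebesgue measure) of ϑ_{M,R₂,R₁}(τ₁,z'₁,τ₁a+b) · conj(ϑ_{M,R₂,R̃₁}(τ₁,z'₁,τ₁a+b)) · exp(-4π·Tr(M·((1/2)y'₁R₂M⁻¹ + v₁a)ᵀ·v₁⁻¹·((1/2)y'₁R₂M⁻¹ + v₁a))) · det(v₁)^{r} equals det(v₁)^{r/2}·det(4M)^{-m/2} if R₁ - R̃₁ = X·(2M) for some integer m×r matrix X, and equals 0 otherwise. -/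
open Matrix MeasureTheory
open scoped Classical

/-- The theta series `ϑ_{M,R}(τ,z) = ∑_{p ≡ R mod ℤ^{(m,r)}(2M)}
exp(2πi((1/4)Tr(pM⁻¹pᵀτ) + Tr(pzᵀ)))`. -/
noncomputable def theta {m r : ℕ} (M : Matrix (Fin r) (Fin r) ℝ)
    (R : Matrix (Fin m) (Fin r) ℤ) (τ : Matrix (Fin m) (Fin m) ℂ)
    (z : Matrix (Fin m) (Fin r) ℂ) : ℂ :=
  ∑' p : {p : Matrix (Fin m) (Fin r) ℤ //
      ∃ X : Matrix (Fin m) (Fin r) ℤ,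
        (p - R).map (Int.cast : ℤ → ℝ) = X.map (Int.cast : ℤ → ℝ) * ((2 : ℝ) • M)},
    Complex.exp (2 * (Real.pi : ℂ) * Complex.I *
      ((1/4 : ℂ) * Matrix.trace
          ((((p.1.map (Int.cast : ℤ → ℝ)) * M⁻¹ * (p.1.map (Int.cast : ℤ → ℝ))ᵀ).map
            Complex.ofReal) * τ) +
        Matrix.trace ((p.1.map fun n : ℤ => (n : ℂ)) * zᵀ)))

/-- The shifted theta series `ϑ_{M,R₂,R}(τ,z'₁,z'₂) = ϑ_{M,R}(τ, (1/2)z'₁R₂M⁻¹ + z'₂)`. -/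
noncomputable def thetaShift {m t r : ℕ} (M : Matrix (Fin r) (Fin r) ℝ)
    (R₂ : Matrix (Fin t) (Fin r) ℤ) (R : Matrix (Fin m) (Fin r) ℤ)
    (τ : Matrix (Fin m) (Fin m) ℂ) (z₁ : Matrix (Fin m) (Fin t) ℂ)
    (z₂ : Matrix (Fin m) (Fin r) ℂ) : ℂ :=
  theta M R τ
    ((1/2 : ℂ) • (z₁ * (R₂.map fun n : ℤ => (n : ℂ)) * (M⁻¹.map Complex.ofReal)) + z₂)


/-! ### Part 1: algebra -/

noncomputable def tm {m r : ℕ} (M : Matrix (Fin r) (Fin r) ℝ) (τ : Matrix (Fin m) (Fin m) ℂ)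
    (p : Matrix (Fin m) (Fin r) ℤ) (z : Matrix (Fin m) (Fin r) ℂ) : ℂ :=
  Complex.exp (2 * (Real.pi : ℂ) * Complex.I *
      ((1/4 : ℂ) * Matrix.trace
          ((((p.map (Int.cast : ℤ → ℝ)) * M⁻¹ * (p.map (Int.cast : ℤ → ℝ))ᵀ).map
            Complex.ofReal) * τ) +
        Matrix.trace ((p.map fun n : ℤ => (n : ℂ)) * zᵀ)))

noncomputable def Qf {m r : ℕ} (v : Matrix (Fin m) (Fin m) ℝ) (M : Matrix (Fin r) (Fin r) ℝ)
    (x : Matrix (Fin m) (Fin r) ℝ) : ℝ := Matrix.trace (v * x * M * xᵀ)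

lemma intmap_mul {m r k : ℕ} (X : Matrix (Fin m) (Fin r) ℤ) (N : Matrix (Fin r) (Fin k) ℤ) :
    (X * N).map (Int.cast : ℤ → ℝ) = X.map (Int.cast : ℤ → ℝ) * N.map (Int.cast : ℤ → ℝ) := by
  exact Matrix.map_mul (f := Int.castRingHom ℝ)

lemma intmap_inj {m r : ℕ} {X Y : Matrix (Fin m) (Fin r) ℤ}
    (h : X.map (Int.cast : ℤ → ℝ) = Y.map (Int.cast : ℤ → ℝ)) : X = Y := by
  ext i j
  have := congrFun (congrFun h i) j
  simpa using this

lemma N_cancel {m r : ℕ} {M : Matrix (Fin r) (Fin r) ℝ} (hdet : M.det ≠ 0)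
    {N : Matrix (Fin r) (Fin r) ℤ} (hN : N.map (Int.cast : ℤ → ℝ) = (2 : ℝ) • M)
    {X Y : Matrix (Fin m) (Fin r) ℤ} (h : X * N = Y * N) : X = Y := by
  apply intmap_inj
  have h1 := congrArg (fun A => A.map (Int.cast : ℤ → ℝ)) h
  simp only [intmap_mul, hN] at h1
  have h2 := congrArg (fun A => A * M⁻¹) h1
  simp only [Matrix.mul_smul, Matrix.smul_mul, Matrix.mul_assoc,
    Matrix.mul_nonsing_inv M (isUnit_iff_ne_zero.mpr hdet), Matrix.mul_one] at h2
  exact smul_right_injective _ (two_ne_zero) h2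

lemma theta_eq {m r : ℕ} {M : Matrix (Fin r) (Fin r) ℝ} (hdet : M.det ≠ 0)
    {N : Matrix (Fin r) (Fin r) ℤ} (hN : N.map (Int.cast : ℤ → ℝ) = (2 : ℝ) • M)
    (R : Matrix (Fin m) (Fin r) ℤ) (τ : Matrix (Fin m) (Fin m) ℂ)
    (z : Matrix (Fin m) (Fin r) ℂ) :
    theta M R τ z = ∑' X : Matrix (Fin m) (Fin r) ℤ, tm M τ (R + X * N) z := by
  let e : Matrix (Fin m) (Fin r) ℤ ≃ {p : Matrix (Fin m) (Fin r) ℤ //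
      ∃ X : Matrix (Fin m) (Fin r) ℤ,
        (p - R).map (Int.cast : ℤ → ℝ) = X.map (Int.cast : ℤ → ℝ) * ((2 : ℝ) • M)} :=
    Equiv.ofBijective (fun X => ⟨R + X * N, X, by
        rw [add_sub_cancel_left, intmap_mul, hN]⟩) (by
      constructor
      · intro X Y h
        have h1 := congrArg Subtype.val h
        simp only at h1
        exact N_cancel hdet hN (add_left_cancel h1)
      · rintro ⟨p, X, hX⟩
        refine ⟨X, Subtype.ext ?_⟩
        simp only
        rw [← hN, ← intmap_mul] at hX
        rw [← intmap_inj hX]; abel)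
  unfold theta
  rw [← e.tsum_eq]
  rfl

lemma im_trace {m k : ℕ} (A : Matrix (Fin m) (Fin k) ℝ) (τ : Matrix (Fin k) (Fin m) ℂ) :
    (Matrix.trace (A.map Complex.ofReal * τ)).im = Matrix.trace (A * τ.map Complex.im) := by
  simp [Matrix.trace, Matrix.mul_apply]

lemma tm_norm {m r : ℕ} (M : Matrix (Fin r) (Fin r) ℝ) (τ : Matrix (Fin m) (Fin m) ℂ)
    (p : Matrix (Fin m) (Fin r) ℤ) (z : Matrix (Fin m) (Fin r) ℂ) :
    ‖tm M τ p z‖ = Real.exp (-2 * Real.pi * (1/4 * Matrix.trace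
      (p.map (Int.cast : ℤ → ℝ) * M⁻¹ * (p.map (Int.cast : ℤ → ℝ))ᵀ * τ.map Complex.im)
      + Matrix.trace (p.map (Int.cast : ℤ → ℝ) * (z.map Complex.im)ᵀ))) := by
  have h : (p.map fun n : ℤ => (n : ℂ)) = (p.map (Int.cast : ℤ → ℝ)).map Complex.ofReal := by
    ext i j; simp
  rw [tm, Complex.norm_exp, ← im_trace, ← Matrix.transpose_map (M := z), ← im_trace, h]
  congr 1
  generalize Matrix.trace (_ : Matrix (Fin m) (Fin m) ℂ) = A
  generalize Matrix.trace (_ : Matrix (Fin m) (Fin m) ℂ) = B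
  simp [Complex.mul_re, Complex.mul_im]

lemma key_alg {m r : ℕ} {M : Matrix (Fin r) (Fin r) ℝ} (hdet : M.det ≠ 0) (hs : Mᵀ = M)
    {v : Matrix (Fin m) (Fin m) ℝ} (hv : v.det ≠ 0) (hvs : vᵀ = v)
    (p d a : Matrix (Fin m) (Fin r) ℝ) :
    1/4 * Matrix.trace (p * M⁻¹ * pᵀ * v) + Matrix.trace (p * (d + v * a)ᵀ)
      + Matrix.trace (M * (d + v * a)ᵀ * v⁻¹ * (d + v * a))
      = Qf v M (a + (v⁻¹ * d + (1/2 : ℝ) • (p * M⁻¹))) := by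
  have hu := isUnit_iff_ne_zero.mpr hdet
  have hvu := isUnit_iff_ne_zero.mpr hv
  obtain ⟨u, hu'⟩ : ∃ u, u = a + v⁻¹ * d := ⟨_, rfl⟩
  have h1 : d + v * a = v * u := by
    rw [hu', Matrix.mul_add, Matrix.mul_nonsing_inv_cancel_left _ _ hvu]; abel
  have hMi : (M⁻¹)ᵀ = M⁻¹ := by rw [Matrix.transpose_nonsing_inv, hs]
  rw [h1, ← add_assoc, ← hu', Qf]
  simp only [Matrix.transpose_mul, Matrix.transpose_add, Matrix.transpose_smul, hvs, hMi]
  simp only [Matrix.mul_add, Matrix.add_mul, Matrix.mul_smul, Matrix.smul_mul, Matrix.trace_add,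
    Matrix.trace_smul, smul_eq_mul]
  have e1 : v * (p * M⁻¹) * M = v * p := by
    rw [Matrix.mul_assoc, Matrix.mul_assoc, Matrix.nonsing_inv_mul _ hu, Matrix.mul_one]
  have e2 : v * u * M * (M⁻¹ * pᵀ) = v * u * pᵀ := by
    rw [← Matrix.mul_assoc, Matrix.mul_assoc _ M, Matrix.mul_nonsing_inv _ hu, Matrix.mul_one]
  rw [e1, e2]
  have e3 : trace (v * p * uᵀ) = trace (p * (uᵀ * v)) := by
    rw [Matrix.mul_assoc, Matrix.trace_mul_comm, Matrix.mul_assoc]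
  have e4 : trace (v * u * pᵀ) = trace (p * (uᵀ * v)) := by
    rw [← Matrix.trace_transpose]
    simp [hvs, Matrix.transpose_mul]
  have e5 : trace (v * p * (M⁻¹ * pᵀ)) = trace (p * M⁻¹ * pᵀ * v) := by
    rw [Matrix.trace_mul_comm (p * M⁻¹ * pᵀ) v]; simp only [Matrix.mul_assoc]
  have e6 : trace (M * (uᵀ * v) * v⁻¹ * (v * u)) = trace (v * u * M * uᵀ) := by
    rw [Matrix.mul_assoc M, Matrix.mul_nonsing_inv_cancel_right _ _ hvu, Matrix.trace_mul_comm,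
      Matrix.mul_assoc (v * u)]
  rw [e3, e4, e5, e6]
  ring

lemma tm_split {m r : ℕ} (M : Matrix (Fin r) (Fin r) ℝ) (τ : Matrix (Fin m) (Fin m) ℂ)
    (p : Matrix (Fin m) (Fin r) ℤ) (w : Matrix (Fin m) (Fin r) ℂ) (b : Matrix (Fin m) (Fin r) ℝ) :
    tm M τ p (w + b.map Complex.ofReal) = tm M τ p w *
      ∏ i, ∏ j, Complex.exp (2 * Real.pi * Complex.I * (p i j : ℂ) * b i j) := by
  simp_rw [← Complex.exp_sum]
  rw [tm, tm, ← Complex.exp_add]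
  congr 1
  rw [Matrix.transpose_add, Matrix.mul_add, Matrix.trace_add]
  have : trace ((p.map fun n : ℤ => (n : ℂ)) * (b.map Complex.ofReal)ᵀ)
      = ∑ i, ∑ j, (p i j : ℂ) * b i j := by
    simp [Matrix.trace, Matrix.mul_apply]
  rw [this]
  simp only [mul_assoc, ← Finset.mul_sum]
  ring

lemma tm_prod {m r : ℕ} (M : Matrix (Fin r) (Fin r) ℝ) (τ : Matrix (Fin m) (Fin m) ℂ)
    (p q : Matrix (Fin m) (Fin r) ℤ) (w : Matrix (Fin m) (Fin r) ℂ)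
    (b : Matrix (Fin m) (Fin r) ℝ) :
    tm M τ p (w + b.map Complex.ofReal) * (starRingEnd ℂ) (tm M τ q (w + b.map Complex.ofReal))
     = tm M τ p w * (starRingEnd ℂ) (tm M τ q w) *
      ∏ i, ∏ j, Complex.exp (2 * Real.pi * Complex.I * ((p i j - q i j : ℤ) : ℂ) * b i j) := by
  rw [tm_split, tm_split, map_mul, mul_mul_mul_comm]
  congr 1
  simp only [map_prod, ← Finset.prod_mul_distrib, ← Complex.exp_conj, ← Complex.exp_add]
  refine Finset.prod_congr rfl fun i _ => Finset.prod_congr rfl fun j _ => ?_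
  congr 1
  have h2 : (starRingEnd ℂ) 2 = 2 := Complex.conj_ofNat 2
  simp [h2]
  ring

/-! ### Part 2: Gaussian integral -/

open scoped MatrixOrder in
lemma posdef_factor {n : ℕ} {v : Matrix (Fin n) (Fin n) ℝ} (hv : v.PosDef) :
    ∃ A : Matrix (Fin n) (Fin n) ℝ, Aᵀ * A = v ∧ A * Aᵀ = v := by
  have h0 : 0 ≤ v := Matrix.nonneg_iff_posSemidef.mpr hv.posSemidef
  have hs : (CFC.sqrt v)ᵀ = CFC.sqrt v := by
    have : (CFC.sqrt v).PosSemidef := Matrix.nonneg_iff_posSemidef.mp (CFC.sqrt_nonneg v)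
    have h := this.isHermitian
    rw [Matrix.IsHermitian, Matrix.conjTranspose_eq_transpose_of_trivial] at h
    exact h
  refine ⟨CFC.sqrt v, ?_, ?_⟩ <;> rw [hs] <;> exact CFC.sqrt_mul_sqrt_self v h0

noncomputable def LAB {m r : ℕ} (A : Matrix (Fin m) (Fin m) ℝ) (B : Matrix (Fin r) (Fin r) ℝ) :
    (Fin m → Fin r → ℝ) →ₗ[ℝ] (Fin m → Fin r → ℝ) where
  toFun a := A * Matrix.of a * B
  map_add' a b := by
    change A * (Matrix.of a + Matrix.of b) * B = _
    rw [Matrix.mul_add, Matrix.add_mul]; rfl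
  map_smul' c a := by
    change A * (c • Matrix.of a) * B = _
    rw [Matrix.mul_smul, Matrix.smul_mul]; rfl

def vecE (m r : ℕ) : (Fin m → Fin r → ℝ) ≃ₗ[ℝ] (Fin r × Fin m → ℝ) where
  toFun a x := a x.2 x.1
  invFun f i j := f (j, i)
  map_add' _ _ := rfl
  map_smul' _ _ := rfl
  left_inv _ := rfl
  right_inv _ := rfl

lemma det_LAB {m r : ℕ} (A : Matrix (Fin m) (Fin m) ℝ) (B : Matrix (Fin r) (Fin r) ℝ) :
    LinearMap.det (LAB A B) = A.det ^ r * B.det ^ m := by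
  rw [← LinearMap.det_conj (LAB A B) (vecE m r)]
  have : (vecE m r : (Fin m → Fin r → ℝ) →ₗ[ℝ] (Fin r × Fin m → ℝ)) ∘ₗ LAB A B ∘ₗ
      ((vecE m r).symm : (Fin r × Fin m → ℝ) →ₗ[ℝ] (Fin m → Fin r → ℝ))
      = Matrix.toLin' (Matrix.kroneckerMap (fun x y => x * y) Bᵀ A) := by
    apply LinearMap.ext
    intro f
    have h := Matrix.kronecker_mulVec_vec A (Matrix.of ((vecE m r).symm f)) Bᵀ
    rw [Matrix.transpose_transpose] at h
    rw [Matrix.toLin'_apply]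
    exact h.symm
  rw [this, LinearMap.det_toLin', Matrix.det_kronecker]
  simp [mul_comm]

lemma Qf_eq_sum {m r : ℕ} {v : Matrix (Fin m) (Fin m) ℝ} {M : Matrix (Fin r) (Fin r) ℝ}
    {A : Matrix (Fin m) (Fin m) ℝ} {B : Matrix (Fin r) (Fin r) ℝ}
    (hA : Aᵀ * A = v) (hB : B * Bᵀ = M) (x : Fin m → Fin r → ℝ) :
    Qf v M (Matrix.of x) = ∑ i, ∑ j, (LAB A B x i j) ^ 2 := by
  have h : Qf v M (Matrix.of x) = trace ((A * Matrix.of x * B) * (A * Matrix.of x * B)ᵀ) := by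
    rw [Qf, ← hA, ← hB, Matrix.mul_assoc Aᵀ, Matrix.mul_assoc Aᵀ, Matrix.mul_assoc Aᵀ,
      Matrix.trace_mul_comm]
    simp only [Matrix.transpose_mul, Matrix.mul_assoc]
  rw [h]
  simp only [Matrix.trace, Matrix.diag, Matrix.mul_apply (M := A * Matrix.of x * B),
    Matrix.transpose_apply, ← pow_two]
  rfl

lemma gauss_std (m r : ℕ) :
    Integrable (fun x : Fin m → Fin r → ℝ => Real.exp (-(4 * Real.pi) * ∑ i, ∑ j, (x i j) ^ 2)) ∧
    ∫ x : Fin m → Fin r → ℝ, Real.exp (-(4 * Real.pi) * ∑ i, ∑ j, (x i j) ^ 2)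
      = ((1/2 : ℝ) ^ r) ^ m := by
  have h : (fun x : Fin m → Fin r → ℝ => Real.exp (-(4 * Real.pi) * ∑ i, ∑ j, (x i j) ^ 2))
      = fun x => ∏ i, ∏ j, Real.exp (-(4 * Real.pi) * (x i j) ^ 2) := by
    ext x
    simp_rw [← Real.exp_sum, Finset.mul_sum]
  have hp := Real.pi_pos
  rw [h]
  constructor
  · apply Integrable.fintype_prod (f := fun (_ : Fin m) (y : Fin r → ℝ) =>
      ∏ j, Real.exp (-(4 * Real.pi) * (y j) ^ 2))
    intro i
    apply Integrable.fintype_prod (f := fun (_ : Fin r) (y : ℝ) =>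
      Real.exp (-(4 * Real.pi) * y ^ 2))
    intro j
    exact integrable_exp_neg_mul_sq (by positivity)
  · rw [integral_fintype_prod_volume_eq_pow (fun (y : Fin r → ℝ) =>
      ∏ j, Real.exp (-(4 * Real.pi) * (y j) ^ 2)),
      integral_fintype_prod_volume_eq_pow (fun (y : ℝ) =>
      Real.exp (-(4 * Real.pi) * y ^ 2)), integral_gaussian]
    have : √(Real.pi / (4 * Real.pi)) = 1/2 := by
      rw [show Real.pi / (4 * Real.pi) = (1/2)^2 by field_simp; norm_num]
      exact Real.sqrt_sq (by norm_num)
    rw [this]; simp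

lemma gauss_Q {m r : ℕ} {v : Matrix (Fin m) (Fin m) ℝ} {M : Matrix (Fin r) (Fin r) ℝ}
    (hv : v.PosDef) (hM : M.PosDef) :
    Integrable (fun x : Fin m → Fin r → ℝ => Real.exp (-(4 * Real.pi) * Qf v M (Matrix.of x))) ∧
    (∫ x : Fin m → Fin r → ℝ, Real.exp (-(4 * Real.pi) * Qf v M (Matrix.of x))) * v.det ^ r
      = v.det ^ ((r : ℝ) / 2) * ((4 : ℝ) • M).det ^ (-((m : ℝ) / 2)) := by
  obtain ⟨A, hA, -⟩ := posdef_factor hv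
  obtain ⟨B, -, hB⟩ := posdef_factor hM
  have hAd : A.det ^ 2 = v.det := by rw [← hA]; simp [pow_two]
  have hBd : B.det ^ 2 = M.det := by rw [← hB]; simp [pow_two]
  have hvp := hv.det_pos
  have hMp := hM.det_pos
  have hA0 : A.det ≠ 0 := by rintro h; simp [h] at hAd; linarith
  have hB0 : B.det ≠ 0 := by rintro h; simp [h] at hBd; linarith
  have hdet : LinearMap.det (LAB (m := m) (r := r) A B) ≠ 0 := by
    rw [det_LAB]; positivity
  have hmap := Measure.map_linearMap_addHaar_eq_smul_addHaar
    (volume : Measure (Fin m → Fin r → ℝ)) hdet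
  have hcont : Continuous (LAB (m := m) (r := r) A B) := LinearMap.continuous_of_finiteDimensional _
  obtain ⟨g1, g2⟩ := gauss_std m r
  have hint : Integrable (fun x : Fin m → Fin r → ℝ =>
      Real.exp (-(4 * Real.pi) * ∑ i, ∑ j, (x i j) ^ 2))
      (Measure.map (LAB (m := m) (r := r) A B) volume) := by
    rw [hmap]; exact g1.smul_measure ENNReal.ofReal_ne_top
  have hme : AEMeasurable (LAB (m := m) (r := r) A B) volume := hcont.measurable.aemeasurable
  simp_rw [Qf_eq_sum hA hB]
  refine ⟨hint.comp_aemeasurable hme, ?_⟩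
  have := integral_map hme hint.aestronglyMeasurable
  rw [← this, hmap, integral_smul_measure, g2, det_LAB, ENNReal.toReal_ofReal (abs_nonneg _)]
  have hAabs : |A.det| = v.det ^ ((1:ℝ)/2) := by
    rw [← Real.sqrt_eq_rpow, ← hAd, Real.sqrt_sq_eq_abs]
  have hBabs : |B.det| = M.det ^ ((1:ℝ)/2) := by
    rw [← Real.sqrt_eq_rpow, ← hBd, Real.sqrt_sq_eq_abs]
  rw [abs_inv, abs_mul, abs_pow, abs_pow, hAabs, hBabs, Matrix.det_smul, Fintype.card_fin,
    Real.mul_rpow (by positivity) hMp.le, smul_eq_mul, mul_inv, ← Real.rpow_mul_natCast hvp.le,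
    ← Real.rpow_mul_natCast hMp.le, ← Real.rpow_neg hvp.le, ← Real.rpow_neg hMp.le]
  have e1 : v.det ^ r = v.det ^ (r:ℝ) := (Real.rpow_natCast _ _).symm
  have e2 : ((4:ℝ) ^ r) ^ (-((m:ℝ)/2)) = ((1/2 : ℝ) ^ r) ^ m := by
    have h4 : (4:ℝ) = ((1/2 : ℝ)) ^ (-2 : ℝ) := by
      rw [Real.rpow_neg (by norm_num)]; norm_num
    rw [← Real.rpow_natCast 4 r, h4, ← Real.rpow_mul (by norm_num), ← Real.rpow_mul (by norm_num),
      ← pow_mul, ← Real.rpow_natCast]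
    congr 1
    push_cast; ring
  have e3 : v.det ^ (-((1:ℝ)/2 * r)) * v.det ^ (r:ℝ) = v.det ^ ((r:ℝ)/2) := by
    rw [← Real.rpow_add hvp]; congr 1; ring
  rw [e1, e2, ← e3, show (-((m:ℝ)/2)) = -((1:ℝ)/2*m) by ring]
  ring

/-! ### Part 3: summability, tiling, characters -/

def bx (m r : ℕ) : Set (Fin m → Fin r → ℝ) :=
  Set.pi Set.univ fun _ : Fin m => Set.pi Set.univ fun _ : Fin r => Set.Icc (0 : ℝ) 1

lemma Qf_lower {m r : ℕ} {v : Matrix (Fin m) (Fin m) ℝ} {M : Matrix (Fin r) (Fin r) ℝ}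
    (hv : v.PosDef) (hM : M.PosDef) :
    ∃ c > 0, ∀ x : Fin m → Fin r → ℝ, c * ∑ i, ∑ j, (x i j) ^ 2 ≤ Qf v M (Matrix.of x) := by
  obtain ⟨A, hA, -⟩ := posdef_factor hv
  obtain ⟨B, -, hB⟩ := posdef_factor hM
  have hAd : A.det ^ 2 = v.det := by rw [← hA]; simp [pow_two]
  have hBd : B.det ^ 2 = M.det := by rw [← hB]; simp [pow_two]
  have hvp := hv.det_pos
  have hMp := hM.det_pos
  have hA0 : A.det ≠ 0 := by rintro h; simp [h] at hAd; linarith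
  have hB0 : B.det ≠ 0 := by rintro h; simp [h] at hBd; linarith
  have hdet : LinearMap.det (LAB (m := m) (r := r) A B) ≠ 0 := by
    rw [det_LAB]; positivity
  have hker : (LAB (m := m) (r := r) A B).ker = ⊥ := by
    exact (LinearMap.equivOfDetNeZero _ hdet).ker
  obtain ⟨K, hK, hL⟩ := LinearMap.exists_antilipschitzWith _ hker
  have hK' : (0:ℝ) < K := hK
  have hbd : ∀ x : Fin m → Fin r → ℝ, ∑ i, ∑ j, (x i j) ^ 2
      ≤ ((m * r + 1) * K ^ 2) * Qf v M (Matrix.of x) := by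
    intro x
    rw [Qf_eq_sum hA hB]
    set y := LAB A B x with hy
    have h1 : ‖x‖ ≤ K * ‖y‖ := by
      have := hL.le_mul_dist x 0
      simpa [dist_zero_right] using this
    have h2 : ‖y‖ ^ 2 ≤ ∑ i, ∑ j, (y i j) ^ 2 := by
      have hS : 0 ≤ ∑ i, ∑ j, (y i j) ^ 2 :=
        Finset.sum_nonneg fun i _ => Finset.sum_nonneg fun j _ => sq_nonneg _
      have : ‖y‖ ≤ √(∑ i, ∑ j, (y i j) ^ 2) := by
        rw [pi_norm_le_iff_of_nonneg (Real.sqrt_nonneg _)]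
        intro i
        rw [pi_norm_le_iff_of_nonneg (Real.sqrt_nonneg _)]
        intro j
        apply Real.le_sqrt_of_sq_le
        rw [Real.norm_eq_abs, sq_abs]
        refine le_trans ?_ (Finset.single_le_sum (f := fun i => ∑ j, (y i j)^2)
          (fun i _ => Finset.sum_nonneg fun j _ => sq_nonneg _) (Finset.mem_univ i))
        exact Finset.single_le_sum (f := fun j => (y i j)^2)
          (fun j _ => sq_nonneg _) (Finset.mem_univ j)
      calc ‖y‖^2 ≤ (√(∑ i, ∑ j, (y i j) ^ 2))^2 := by gcongr
        _ = _ := Real.sq_sqrt hS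
    have h3 : ∑ i, ∑ j, (x i j) ^ 2 ≤ m * r * ‖x‖ ^ 2 := by
      calc ∑ i, ∑ j, (x i j) ^ 2 ≤ ∑ i : Fin m, ∑ j : Fin r, ‖x‖ ^ 2 := by
            refine Finset.sum_le_sum fun i _ => Finset.sum_le_sum fun j _ => ?_
            rw [← sq_abs, ← Real.norm_eq_abs]
            gcongr
            exact (norm_le_pi_norm (x i) j).trans (norm_le_pi_norm x i)
        _ = _ := by simp; ring
    calc ∑ i, ∑ j, (x i j) ^ 2 ≤ m * r * ‖x‖ ^ 2 := h3
      _ ≤ (m * r + 1) * ‖x‖ ^ 2 := by gcongr; linarith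
      _ ≤ (m * r + 1) * (K * ‖y‖) ^ 2 := by gcongr
      _ = ((m * r + 1) * K ^ 2) * ‖y‖ ^ 2 := by ring
      _ ≤ _ := by gcongr
  refine ⟨((m * r + 1) * K ^ 2)⁻¹, by positivity, fun x => ?_⟩
  rw [inv_mul_le_iff₀ (by positivity)]
  exact hbd x

lemma summable_pi {α : Type*} {f : α → ℝ} (hf0 : ∀ x, 0 ≤ f x) (hf : Summable f) (n : ℕ) :
    Summable fun X : Fin n → α => ∏ i, f (X i) := by
  induction n with
  | zero => exact Summable.of_finite
  | succ n ih =>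
    rw [← (Fin.consEquiv (fun _ : Fin (n+1) => α)).summable_iff]
    have := hf.mul_of_nonneg ih hf0 (fun X => Finset.prod_nonneg fun i _ => hf0 _)
    convert this using 2 with x
    simp [Fin.prod_univ_succ, Fin.consEquiv]

lemma summable_gauss_int {c : ℝ} (hc : 0 < c) : Summable fun n : ℤ => Real.exp (-c * (n:ℝ) ^ 2) := by
  have h1 : Summable fun n : ℕ => Real.exp (-c * (n:ℝ)) := by
    have := Real.summable_exp_nat_mul_iff (a := -c)
    simpa [mul_comm] using this.mpr (by linarith)
  have h2 : Summable fun n : ℕ => Real.exp (-c * (n:ℝ) ^ 2) := by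
    refine Summable.of_nonneg_of_le (fun _ => (Real.exp_pos _).le) (fun n => ?_) h1
    apply Real.exp_le_exp.mpr
    have : (n:ℝ) ≤ (n:ℝ)^2 := by
      have : n ≤ n ^ 2 := Nat.le_self_pow two_ne_zero n
      exact_mod_cast this
    nlinarith
  exact Summable.of_nat_of_neg (by simpa using h2) (by simpa using h2)

lemma summable_gauss {m r : ℕ} {c : ℝ} (hc : 0 < c) :
    Summable fun X : Matrix (Fin m) (Fin r) ℤ => Real.exp (-c * ∑ i, ∑ j, (X i j : ℝ) ^ 2) := by
  have h1 := summable_pi (f := fun n : ℤ => Real.exp (-c * (n:ℝ) ^ 2))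
    (fun n => (Real.exp_pos _).le) (summable_gauss_int hc) r
  have h2 := summable_pi (f := fun X : Fin r → ℤ => ∏ j, Real.exp (-c * (X j:ℝ) ^ 2))
    (fun n => Finset.prod_nonneg fun i _ => (Real.exp_pos _).le) h1 m
  refine h2.congr fun X => ?_
  simp_rw [← Real.exp_sum, ← Finset.mul_sum]

lemma summable_bound {m r : ℕ} {v : Matrix (Fin m) (Fin m) ℝ} {M : Matrix (Fin r) (Fin r) ℝ}
    (hv : v.PosDef) (hM : M.PosDef) (s : Matrix (Fin m) (Fin r) ℝ) :
    ∃ B : Matrix (Fin m) (Fin r) ℤ → ℝ, Summable B ∧ ∀ X, ∀ a ∈ bx m r,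
      Real.exp (-(2 * Real.pi) * Qf v M (Matrix.of a + (s + X.map (Int.cast : ℤ → ℝ)))) ≤ B X := by
  obtain ⟨c, hc, hQ⟩ := Qf_lower hv hM
  have hp := Real.pi_pos
  obtain ⟨q2, hq2⟩ : ∃ q2 : ℝ, q2 = ∑ i : Fin m, ∑ j : Fin r, (1 + |s i j|) ^ 2 := ⟨_, rfl⟩
  have hsum := (summable_gauss (m := m) (r := r) (c := Real.pi * c) (mul_pos hp hc)).mul_left
    (Real.exp (2 * Real.pi * c * q2))
  refine ⟨_, hsum, ?_⟩
  intro X a ha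
  rw [← Real.exp_add]
  apply Real.exp_le_exp.mpr
  have h1 : c * ∑ i, ∑ j, ((Matrix.of a + (s + X.map (Int.cast : ℤ → ℝ))) i j) ^ 2 ≤
    Qf v M (Matrix.of a + (s + X.map (Int.cast : ℤ → ℝ))) :=
    hQ (fun i j => (Matrix.of a + (s + X.map (Int.cast : ℤ → ℝ))) i j)
  have h2 : ∑ i, ∑ j, (X i j : ℝ) ^ 2 ≤ 2 * ∑ i, ∑ j, (1 + |s i j|) ^ 2
      + 2 * ∑ i, ∑ j, ((Matrix.of a + (s + X.map (Int.cast : ℤ → ℝ))) i j) ^ 2 := by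
    simp only [Finset.mul_sum, ← Finset.sum_add_distrib]
    refine Finset.sum_le_sum fun i _ => Finset.sum_le_sum fun j _ => ?_
    have hij : a i j ∈ Set.Icc (0:ℝ) 1 := ha i (Set.mem_univ _) j (Set.mem_univ _)
    change (X i j : ℝ) ^ 2 ≤ 2 * (1 + |s i j|) ^ 2 + 2 * (a i j + (s i j + (X i j : ℝ))) ^ 2
    generalize (X i j : ℝ) = n
    generalize s i j = σ
    generalize a i j = α at hij ⊢
    clear h1 hQ
    have hb : |α + σ| ≤ 1 + |σ| :=
      (abs_add_le _ _).trans (by rw [abs_of_nonneg hij.1]; linarith [hij.2])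
    have hb2 : (α + σ) ^ 2 ≤ (1 + |σ|) ^ 2 := by
      rw [← sq_abs]; gcongr
    nlinarith [sq_nonneg (2 * (α + σ) + n)]
  generalize Qf v M (Matrix.of a + (s + X.map (Int.cast : ℤ → ℝ))) = q at h1 ⊢
  generalize ∑ i, ∑ j, ((Matrix.of a + (s + X.map (Int.cast : ℤ → ℝ))) i j) ^ 2 = q1 at h1 h2
  rw [← hq2] at h2
  generalize ∑ i, ∑ j, (X i j : ℝ) ^ 2 = q3 at h2 ⊢
  have h3 := mul_le_mul_of_nonneg_left h1 (by positivity : 0 ≤ 2 * Real.pi)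
  have h4 := mul_le_mul_of_nonneg_left h2 (by positivity : 0 ≤ Real.pi * c)
  linarith

lemma bx_ae (m r : ℕ) : (Set.pi Set.univ fun _ : Fin m => Set.pi Set.univ fun _ : Fin r =>
    Set.Ico (0 : ℝ) 1) =ᵐ[volume] bx m r := by
  apply Measure.ae_eq_set_pi
  intro i _
  apply Measure.ae_eq_set_pi
  intro j _
  exact Ico_ae_eq_Icc

lemma tiling {m r : ℕ} {g : (Fin m → Fin r → ℝ) → ℝ} (hg : Integrable g) :
    ∑' X : Matrix (Fin m) (Fin r) ℤ, ∫ a in bx m r, g (a + fun i j => (X i j : ℝ)) = ∫ a, g a := by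
  let S : Matrix (Fin m) (Fin r) ℤ → Set (Fin m → Fin r → ℝ) :=
    fun X => {a | ∀ i j, ⌊a i j⌋ = X i j}
  have hS : ∀ X, MeasurableSet (S X) := by
    intro X
    have : S X = ⋂ i, ⋂ j, (fun a : Fin m → Fin r → ℝ => ⌊a i j⌋) ⁻¹' {X i j} := by
      ext a; simp [S]
    rw [this]
    refine MeasurableSet.iInter fun i => MeasurableSet.iInter fun j => ?_
    have : Measurable fun a : Fin m → Fin r → ℝ => ⌊a i j⌋ :=
      Int.measurable_floor.comp ((measurable_pi_apply j).comp (measurable_pi_apply i))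
    exact this (measurableSet_singleton _)
  have hd : Pairwise (Function.onFun Disjoint S) := by
    intro X Y hXY
    rw [Function.onFun, Set.disjoint_left]
    intro a ha hb
    apply hXY
    ext i j
    rw [← ha i j, ← hb i j]
  have hU : ⋃ X, S X = Set.univ := by
    rw [Set.eq_univ_iff_forall]
    intro a
    exact Set.mem_iUnion.mpr ⟨Matrix.of fun i j => ⌊a i j⌋, fun i j => rfl⟩
  have : Countable (Matrix (Fin m) (Fin r) ℤ) :=
    inferInstanceAs (Countable (Fin m → Fin r → ℤ))
  have h := hasSum_integral_iUnion (f := g) (μ := volume) hS hd hg.integrableOn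
  rw [hU, setIntegral_univ] at h
  rw [← h.tsum_eq]
  congr 1
  ext X
  rw [← setIntegral_congr_set (bx_ae m r)]
  let w : Fin m → Fin r → ℝ := fun i j => (X i j : ℝ)
  have hpre := (measurePreserving_add_right (volume : Measure (Fin m → Fin r → ℝ))
    w).setIntegral_preimage_emb (measurableEmbedding_addRight w) g (S X)
  rw [← hpre]
  congr 2
  ext a
  simp only [S, Set.mem_pi, Set.mem_univ, true_imp_iff, Set.mem_preimage, Set.mem_ofPred_eq,
    Pi.add_apply, w, Set.mem_Ico, Int.floor_add_intCast, add_eq_right,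
    Int.floor_eq_zero_iff]

lemma char_int (n : ℤ) : ∫ x in Set.Icc (0:ℝ) 1, Complex.exp (2 * Real.pi * Complex.I * (n : ℂ) * x)
    = if n = 0 then 1 else 0 := by
  rw [integral_Icc_eq_integral_Ioc, ← intervalIntegral.integral_of_le zero_le_one]
  split_ifs with h
  · simp [h]
  · have hc : (2 * Real.pi * Complex.I * (n : ℂ)) ≠ 0 := by
      simp [Real.pi_ne_zero, h]
    rw [integral_exp_mul_complex hc]
    have : Complex.exp (2 * Real.pi * Complex.I * (n : ℂ) * (1:ℝ)) = 1 := by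
      rw [Complex.exp_eq_one_iff]; exact ⟨n, by push_cast; ring⟩
    rw [this]; simp

lemma char_box {m r : ℕ} (n : Matrix (Fin m) (Fin r) ℤ) :
    ∫ b in bx m r, ∏ i, ∏ j, Complex.exp (2 * Real.pi * Complex.I * (n i j : ℂ) * b i j)
      = if n = 0 then 1 else 0 := by
  have h1 : (volume : Measure (Fin m → Fin r → ℝ)).restrict (bx m r)
      = Measure.pi fun _ => Measure.pi fun _ => volume.restrict (Set.Icc (0:ℝ) 1) := by
    rw [bx, volume_pi, Measure.restrict_pi_pi]
    congr 1
    ext1 i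
    rw [volume_pi, Measure.restrict_pi_pi]
  rw [h1, integral_fintype_prod_eq_prod (f := fun (i : Fin m) (y : Fin r → ℝ) =>
    ∏ j, Complex.exp (2 * Real.pi * Complex.I * (n i j : ℂ) * y j))]
  have h2 : ∀ i : Fin m, (∫ y, ∏ j, Complex.exp (2 * Real.pi * Complex.I * (n i j : ℂ) * (y j : ℝ))
      ∂(Measure.pi fun _ : Fin r => volume.restrict (Set.Icc (0:ℝ) 1)))
      = ∏ j, if n i j = 0 then (1:ℂ) else 0 := by
    intro i
    rw [integral_fintype_prod_eq_prod (f := fun (j : Fin r) (y : ℝ) =>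
      Complex.exp (2 * Real.pi * Complex.I * (n i j : ℂ) * y))]
    simp_rw [char_int]
  simp_rw [h2]
  split_ifs with h
  · simp [h]
  · have : ∃ i j, n i j ≠ 0 := by
      by_contra! hh
      exact h (by ext i j; simpa using hh i j)
    obtain ⟨i, j, hij⟩ := this
    exact Finset.prod_eq_zero (Finset.mem_univ i)
      (Finset.prod_eq_zero (Finset.mem_univ j) (by simp [hij]))

/-! ### Part 4: assembly -/

noncomputable def wz {m r : ℕ} (c : Matrix (Fin m) (Fin r) ℂ) (τ : Matrix (Fin m) (Fin m) ℂ)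
    (a : Fin m → Fin r → ℝ) : Matrix (Fin m) (Fin r) ℂ :=
  c + τ * (Matrix.of a).map Complex.ofReal

noncomputable def Wt {m r : ℕ} (M : Matrix (Fin r) (Fin r) ℝ) (v : Matrix (Fin m) (Fin m) ℝ)
    (d : Matrix (Fin m) (Fin r) ℝ) (a : Fin m → Fin r → ℝ) : ℝ :=
  Matrix.trace (M * (d + v * Matrix.of a)ᵀ * v⁻¹ * (d + v * Matrix.of a))

lemma tm_cont {m r : ℕ} (M : Matrix (Fin r) (Fin r) ℝ) (τ : Matrix (Fin m) (Fin m) ℂ)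
    (p : Matrix (Fin m) (Fin r) ℤ) : Continuous (tm M τ p) := by
  unfold tm
  refine Complex.continuous_exp.comp (continuous_const.mul (continuous_const.add ?_))
  exact (continuous_const.matrix_mul continuous_id.matrix_transpose).matrix_trace

lemma wz_cont {m r : ℕ} (c : Matrix (Fin m) (Fin r) ℂ) (τ : Matrix (Fin m) (Fin m) ℂ) :
    Continuous (wz c τ) := by
  unfold wz
  refine continuous_const.add (continuous_const.matrix_mul ?_)
  exact Continuous.matrix_map continuous_id Complex.continuous_ofReal

lemma Wt_cont {m r : ℕ} (M : Matrix (Fin r) (Fin r) ℝ) (v : Matrix (Fin m) (Fin m) ℝ)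
    (d : Matrix (Fin m) (Fin r) ℝ) : Continuous (Wt M v d) := by
  unfold Wt
  have h : Continuous fun a : Fin m → Fin r → ℝ => d + v * Matrix.of a :=
    continuous_const.add (continuous_const.matrix_mul continuous_id)
  exact (((continuous_const.matrix_mul h.matrix_transpose).matrix_mul
    continuous_const).matrix_mul h).matrix_trace

lemma norm_key {m r : ℕ} {M : Matrix (Fin r) (Fin r) ℝ} (hdet : M.det ≠ 0) (hs : Mᵀ = M)
    {N : Matrix (Fin r) (Fin r) ℤ} (hN : N.map (Int.cast : ℤ → ℝ) = (2 : ℝ) • M)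
    {τ : Matrix (Fin m) (Fin m) ℂ} {v : Matrix (Fin m) (Fin m) ℝ} (hτv : v = τ.map Complex.im)
    (hv : v.det ≠ 0) (hvs : vᵀ = v)
    {c : Matrix (Fin m) (Fin r) ℂ} {d : Matrix (Fin m) (Fin r) ℝ} (hd : c.map Complex.im = d)
    (R X : Matrix (Fin m) (Fin r) ℤ) (a b : Fin m → Fin r → ℝ) :
    ‖tm M τ (R + X * N) (wz c τ a + (Matrix.of b).map Complex.ofReal)‖
      * Real.exp (-(2 * Real.pi) * Wt M v d a)
      = Real.exp (-(2 * Real.pi) * Qf v M (Matrix.of a +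
        ((v⁻¹ * d + (1/2 : ℝ) • (R.map (Int.cast : ℤ → ℝ) * M⁻¹)) + X.map (Int.cast : ℤ → ℝ)))) := by
  have him : (wz c τ a + (Matrix.of b).map Complex.ofReal).map Complex.im = d + v * Matrix.of a := by
    ext i j
    simp [wz, Matrix.mul_apply, ← hd, hτv]
  have hp : (1/2 : ℝ) • ((R + X * N).map (Int.cast : ℤ → ℝ) * M⁻¹)
      = (1/2 : ℝ) • (R.map (Int.cast : ℤ → ℝ) * M⁻¹) + X.map (Int.cast : ℤ → ℝ) := by
    have h1 : (R + X * N).map (Int.cast : ℤ → ℝ) = R.map (Int.cast : ℤ → ℝ) +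
        X.map (Int.cast : ℤ → ℝ) * ((2:ℝ) • M) := by
      rw [← hN, ← intmap_mul]
      ext i j; simp
    rw [h1, Matrix.add_mul, smul_add, Matrix.mul_smul, Matrix.smul_mul, Matrix.mul_assoc,
      Matrix.mul_nonsing_inv _ (isUnit_iff_ne_zero.mpr hdet), Matrix.mul_one, smul_smul]
    norm_num
  have hk := key_alg hdet hs hv hvs ((R + X * N).map (Int.cast : ℤ → ℝ)) d (Matrix.of a)
  rw [tm_norm, him, ← hτv, ← Real.exp_add, add_assoc (v⁻¹ * d), ← hp, ← hk, Wt]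
  congr 1
  ring

lemma setIntegral_term {m r : ℕ} (M : Matrix (Fin r) (Fin r) ℝ) (τ : Matrix (Fin m) (Fin m) ℂ)
    (p q : Matrix (Fin m) (Fin r) ℤ) (c : Matrix (Fin m) (Fin r) ℂ)
    (W : (Fin m → Fin r → ℝ) → ℝ) :
    ∫ ab : (Fin m → Fin r → ℝ) × (Fin m → Fin r → ℝ) in bx m r ×ˢ bx m r,
      tm M τ p (wz c τ ab.1 + (Matrix.of ab.2).map Complex.ofReal) *
      (starRingEnd ℂ) (tm M τ q (wz c τ ab.1 + (Matrix.of ab.2).map Complex.ofReal)) *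
      Complex.ofReal (W ab.1)
    = (∫ a in bx m r, tm M τ p (wz c τ a) * (starRingEnd ℂ) (tm M τ q (wz c τ a)) *
      Complex.ofReal (W a)) * if p - q = 0 then 1 else 0 := by
  rw [← char_box, Measure.volume_eq_prod, ← setIntegral_prod_mul]
  congr 1
  ext ab
  rw [tm_prod]
  simp only [Matrix.of_apply, Matrix.sub_apply]
  ring

lemma bx_compact (m r : ℕ) : IsCompact (bx m r) :=
  isCompact_univ_pi fun _ => isCompact_univ_pi fun _ => isCompact_Icc

lemma main_aux {m r : ℕ} {M : Matrix (Fin r) (Fin r) ℝ} (hM : M.PosDef) (hs : Mᵀ = M)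
    {N : Matrix (Fin r) (Fin r) ℤ} (hN : N.map (Int.cast : ℤ → ℝ) = (2 : ℝ) • M)
    {τ : Matrix (Fin m) (Fin m) ℂ} {v : Matrix (Fin m) (Fin m) ℝ} (hτv : v = τ.map Complex.im)
    (hv : v.PosDef) (hvs : vᵀ = v)
    {c : Matrix (Fin m) (Fin r) ℂ} {d : Matrix (Fin m) (Fin r) ℝ} (hd : c.map Complex.im = d)
    (R R' : Matrix (Fin m) (Fin r) ℤ) :
    HasSum (fun XY : Matrix (Fin m) (Fin r) ℤ × Matrix (Fin m) (Fin r) ℤ =>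
      (∫ a in bx m r, tm M τ (R + XY.1 * N) (wz c τ a) *
        (starRingEnd ℂ) (tm M τ (R' + XY.2 * N) (wz c τ a)) *
      Complex.ofReal (Real.exp (-4 * Real.pi * Wt M v d a) * v.det ^ r)) *
        if (R + XY.1 * N) - (R' + XY.2 * N) = 0 then 1 else 0)
    (∫ ab : (Fin m → Fin r → ℝ) × (Fin m → Fin r → ℝ) in bx m r ×ˢ bx m r,
      theta M R τ (wz c τ ab.1 + (Matrix.of ab.2).map Complex.ofReal) *
      (starRingEnd ℂ) (theta M R' τ (wz c τ ab.1 + (Matrix.of ab.2).map Complex.ofReal)) *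
      Complex.ofReal (Real.exp (-4 * Real.pi * Wt M v d ab.1) * v.det ^ r)) := by
  have hdet := hM.det_pos.ne'
  have hvd := hv.det_pos.ne'
  have hcount : Countable (Matrix (Fin m) (Fin r) ℤ) :=
    inferInstanceAs (Countable (Fin m → Fin r → ℤ))
  have hfin : IsFiniteMeasureOnCompacts
      (volume : Measure ((Fin m → Fin r → ℝ) × (Fin m → Fin r → ℝ))) := by
    have : IsFiniteMeasureOnCompacts (volume : Measure (Fin m → Fin r → ℝ)) := inferInstance
    rw [Measure.volume_eq_prod]
    exact ⟨fun K hK => by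
      have h1 := (hK.image continuous_fst).measure_lt_top (μ := (volume : Measure (Fin m → Fin r → ℝ)))
      have h2 := (hK.image continuous_snd).measure_lt_top (μ := (volume : Measure (Fin m → Fin r → ℝ)))
      refine lt_of_le_of_lt (measure_mono (Set.subset_fst_image_prod_snd_image (s := K))) ?_
      rw [Measure.prod_prod]
      exact ENNReal.mul_lt_top h1 h2⟩
  obtain ⟨B, hB, hBb⟩ := summable_bound hv hM
    (v⁻¹ * d + (1/2 : ℝ) • (R.map (Int.cast : ℤ → ℝ) * M⁻¹))
  obtain ⟨B', hB', hBb'⟩ := summable_bound hv hM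
    (v⁻¹ * d + (1/2 : ℝ) • (R'.map (Int.cast : ℤ → ℝ) * M⁻¹))
  let F : Matrix (Fin m) (Fin r) ℤ × Matrix (Fin m) (Fin r) ℤ →
      (Fin m → Fin r → ℝ) × (Fin m → Fin r → ℝ) → ℂ := fun XY ab =>
    tm M τ (R + XY.1 * N) (wz c τ ab.1 + (Matrix.of ab.2).map Complex.ofReal) *
      (starRingEnd ℂ) (tm M τ (R' + XY.2 * N) (wz c τ ab.1 + (Matrix.of ab.2).map Complex.ofReal)) *
      Complex.ofReal (Real.exp (-4 * Real.pi * Wt M v d ab.1) * v.det ^ r)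
  have hbox : IsCompact (bx m r ×ˢ bx m r) := (bx_compact m r).prod (bx_compact m r)
  have hzc : Continuous fun ab : (Fin m → Fin r → ℝ) × (Fin m → Fin r → ℝ) =>
      wz c τ ab.1 + (Matrix.of ab.2).map Complex.ofReal :=
    ((wz_cont c τ).comp continuous_fst).add
      (Continuous.matrix_map (A := fun ab : (Fin m → Fin r → ℝ) × (Fin m → Fin r → ℝ) =>
        Matrix.of ab.2) continuous_snd Complex.continuous_ofReal)
  have hFc : ∀ XY, Continuous (F XY) := by
    intro XY
    refine (((tm_cont M τ _).comp hzc).mul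
      (Complex.continuous_conj.comp ((tm_cont M τ _).comp hzc))).mul
      (Complex.continuous_ofReal.comp ((Real.continuous_exp.comp
        (continuous_const.mul ((Wt_cont M v d).comp continuous_fst))).mul continuous_const))
  have hFi : ∀ XY, IntegrableOn (F XY) (bx m r ×ˢ bx m r) := fun XY =>
    (hFc XY).continuousOn.integrableOn_compact hbox
  have hsq : ∀ a, Real.exp (-4 * Real.pi * Wt M v d a) = Real.exp (-(2 * Real.pi) * Wt M v d a) *
      Real.exp (-(2 * Real.pi) * Wt M v d a) := by
    intro a; rw [← Real.exp_add]; congr 1; ring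
  have hFb : ∀ XY, ∀ ab ∈ bx m r ×ˢ bx m r, ‖F XY ab‖ ≤ (B XY.1 * B' XY.2) * v.det ^ r := by
    rintro ⟨X, Y⟩ ⟨a, b⟩ ⟨ha, hb⟩
    have h1 := hBb X a ha
    have h2 := hBb' Y a ha
    rw [← norm_key hdet hs hN hτv hvd hvs hd R X a b] at h1
    rw [← norm_key hdet hs hN hτv hvd hvs hd R' Y a b] at h2
    simp only [F, norm_mul, RCLike.norm_conj, Complex.norm_real, Real.norm_eq_abs]
    rw [abs_of_pos (pow_pos hv.det_pos r), abs_of_pos (Real.exp_pos _), hsq, ← mul_assoc]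
    refine mul_le_mul_of_nonneg_right ?_ (pow_pos hv.det_pos r).le
    calc _ = _ * _ := by rw [mul_mul_mul_comm]
      _ ≤ _ := mul_le_mul h1 h2 (by positivity) (le_trans (by positivity) h1)
  have hBs : Summable fun XY : Matrix (Fin m) (Fin r) ℤ × Matrix (Fin m) (Fin r) ℤ =>
      (B XY.1 * B' XY.2) * v.det ^ r := by
    have h0 : (0 : Fin m → Fin r → ℝ) ∈ bx m r := by
      intro i _ j _; simp
    exact (hB.mul_of_nonneg hB' (fun X => (Real.exp_pos _).le.trans (hBb X 0 h0))
      (fun X => (Real.exp_pos _).le.trans (hBb' X 0 h0))).mul_right _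
  have hvol : volume (bx m r ×ˢ bx m r) ≠ ⊤ := hbox.measure_lt_top.ne
  have hms : MeasurableSet (bx m r ×ˢ bx m r) := hbox.measurableSet
  have hFs : Summable fun XY => ∫ ab in bx m r ×ˢ bx m r, ‖F XY ab‖ := by
    refine Summable.of_nonneg_of_le (fun _ => integral_nonneg fun _ => norm_nonneg _) (fun XY => ?_)
      (hBs.mul_left (volume.real (bx m r ×ˢ bx m r)))
    rw [← smul_eq_mul, ← setIntegral_const]
    exact setIntegral_mono_on (hFi XY).norm (integrableOn_const hvol) hms (hFb XY)
  have hmain := hasSum_integral_of_summable_integral_norm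
    (μ := volume.restrict (bx m r ×ˢ bx m r)) hFi hFs
  have e1 : ∀ XY, ∫ ab in bx m r ×ˢ bx m r, F XY ab = _ := fun XY =>
    setIntegral_term M τ (R + XY.1 * N) (R' + XY.2 * N) c
      (fun a => Real.exp (-4 * Real.pi * Wt M v d a) * v.det ^ r)
  have e2 : ∫ ab in bx m r ×ˢ bx m r, ∑' XY, F XY ab =
      ∫ ab : (Fin m → Fin r → ℝ) × (Fin m → Fin r → ℝ) in bx m r ×ˢ bx m r,
      theta M R τ (wz c τ ab.1 + (Matrix.of ab.2).map Complex.ofReal) *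
      (starRingEnd ℂ) (theta M R' τ (wz c τ ab.1 + (Matrix.of ab.2).map Complex.ofReal)) *
      Complex.ofReal (Real.exp (-4 * Real.pi * Wt M v d ab.1) * v.det ^ r) := by
    refine setIntegral_congr_fun hms ?_
    rintro ⟨a, b⟩ ⟨ha, hb⟩
    have hsum : ∀ (S : Matrix (Fin m) (Fin r) ℤ) (C : Matrix (Fin m) (Fin r) ℤ → ℝ), Summable C →
        (∀ X, ∀ a ∈ bx m r, Real.exp (-(2 * Real.pi) * Qf v M (Matrix.of a +
          ((v⁻¹ * d + (1/2 : ℝ) • (S.map (Int.cast : ℤ → ℝ) * M⁻¹)) +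
            X.map (Int.cast : ℤ → ℝ)))) ≤ C X) →
        Summable fun X : Matrix (Fin m) (Fin r) ℤ => ‖tm M τ (S + X * N) (wz c τ a + (Matrix.of b).map Complex.ofReal)‖ := by
      intro S C hC hCb
      refine Summable.of_nonneg_of_le (fun _ => norm_nonneg _) (fun X => ?_)
        (hC.mul_right (Real.exp (-(2 * Real.pi) * Wt M v d a))⁻¹)
      have h1 := hCb X a ha
      rw [← norm_key hdet hs hN hτv hvd hvs hd S X a b] at h1
      rwa [← div_eq_mul_inv, le_div_iff₀ (Real.exp_pos _)]
    have s1 := hsum R B hB hBb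
    have s2 := hsum R' B' hB' hBb'
    simp only [F]
    rw [tsum_mul_right, theta_eq hdet hN, theta_eq hdet hN, Complex.conj_tsum,
      tsum_mul_tsum_of_summable_norm s1 (by simpa using s2)]
  rw [← e2]
  simp only [e1] at hmain
  exact hmain

lemma normSq_key {m r : ℕ} {M : Matrix (Fin r) (Fin r) ℝ} (hdet : M.det ≠ 0) (hs : Mᵀ = M)
    {N : Matrix (Fin r) (Fin r) ℤ} (hN : N.map (Int.cast : ℤ → ℝ) = (2 : ℝ) • M)
    {τ : Matrix (Fin m) (Fin m) ℂ} {v : Matrix (Fin m) (Fin m) ℝ} (hτv : v = τ.map Complex.im)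
    (hv : v.det ≠ 0) (hvs : vᵀ = v)
    {c : Matrix (Fin m) (Fin r) ℂ} {d : Matrix (Fin m) (Fin r) ℝ} (hd : c.map Complex.im = d)
    (R X : Matrix (Fin m) (Fin r) ℤ) (a : Fin m → Fin r → ℝ) (δ : ℝ) :
    tm M τ (R + X * N) (wz c τ a) * (starRingEnd ℂ) (tm M τ (R + X * N) (wz c τ a)) *
      Complex.ofReal (Real.exp (-4 * Real.pi * Wt M v d a) * δ)
    = Complex.ofReal (Real.exp (-(4 * Real.pi) * Qf v M (Matrix.of a +
        ((v⁻¹ * d + (1/2 : ℝ) • (R.map (Int.cast : ℤ → ℝ) * M⁻¹)) + X.map (Int.cast : ℤ → ℝ))))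
        * δ) := by
  have h := norm_key hdet hs hN hτv hv hvs hd R X a 0
  have h0 : (Matrix.of (0 : Fin m → Fin r → ℝ)).map Complex.ofReal = 0 := by ext i j; simp
  rw [h0, add_zero] at h
  rw [Complex.mul_conj, ← Complex.ofReal_mul, Complex.normSq_eq_norm_sq]
  congr 1
  rw [show -(4 * Real.pi) * Qf v M (Matrix.of a +
        ((v⁻¹ * d + (1/2 : ℝ) • (R.map (Int.cast : ℤ → ℝ) * M⁻¹)) + X.map (Int.cast : ℤ → ℝ)))
      = 2 * (-(2 * Real.pi) * Qf v M (Matrix.of a +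
        ((v⁻¹ * d + (1/2 : ℝ) • (R.map (Int.cast : ℤ → ℝ) * M⁻¹)) + X.map (Int.cast : ℤ → ℝ))))
      by ring, two_mul, Real.exp_add, ← h,
      show -4 * Real.pi * Wt M v d a = -(2 * Real.pi) * Wt M v d a + -(2 * Real.pi) * Wt M v d a
      by ring, Real.exp_add]
  ring


/-- the orthogonality relation (Lemma 4.2) for the shifted theta
series: integrating `ϑ_{M,R₂,R₁} · conj(ϑ_{M,R₂,R₁'})` against the exponential factor
over the fundamental domain `z'₂ = τ₁a + b`, `(a,b) ∈ [0,1]^{m×r} × [0,1]^{m×r}`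
(with Jacobian `det(v₁)^r`) gives `δ_{R₁,R₁' mod 2M} · det(v₁)^{r/2} · det(4M)^{-m/2}`. -/
theorem thetaShift_orthogonality {m t r : ℕ} (hm : 1 ≤ m) (ht : 1 ≤ t) (hr : 1 ≤ r)
    (M : Matrix (Fin r) (Fin r) ℝ) (hM : LPlus M)
    (R₂ : Matrix (Fin t) (Fin r) ℤ) (R₁ R₁' : Matrix (Fin m) (Fin r) ℤ)
    (τ₁ : Matrix (Fin m) (Fin m) ℂ) (hτ : τ₁.IsSymm)
    (z'₁ : Matrix (Fin m) (Fin t) ℂ)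
    (v₁ : Matrix (Fin m) (Fin m) ℝ) (hv₁ : v₁ = τ₁.map Complex.im) (hv₁pos : v₁.PosDef)
    (y'₁ : Matrix (Fin m) (Fin t) ℝ) (hy'₁ : y'₁ = z'₁.map Complex.im) :
    (∫ ab : (Fin m → Fin r → ℝ) × (Fin m → Fin r → ℝ) in
        (Set.pi Set.univ fun _ : Fin m => Set.pi Set.univ fun _ : Fin r =>
          Set.Icc (0 : ℝ) 1) ×ˢ
        (Set.pi Set.univ fun _ : Fin m => Set.pi Set.univ fun _ : Fin r =>
          Set.Icc (0 : ℝ) 1),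
        thetaShift M R₂ R₁ τ₁ z'₁
            (τ₁ * (Matrix.of ab.1).map Complex.ofReal + (Matrix.of ab.2).map Complex.ofReal) *
          (starRingEnd ℂ) (thetaShift M R₂ R₁' τ₁ z'₁
            (τ₁ * (Matrix.of ab.1).map Complex.ofReal + (Matrix.of ab.2).map Complex.ofReal)) *
          Complex.ofReal
            (Real.exp (-4 * Real.pi *
                Matrix.trace (M *
                  ((1/2 : ℝ) • (y'₁ * R₂.map (Int.cast : ℤ → ℝ) * M⁻¹) +
                    v₁ * Matrix.of ab.1)ᵀ * v₁⁻¹ *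
                  ((1/2 : ℝ) • (y'₁ * R₂.map (Int.cast : ℤ → ℝ) * M⁻¹) +
                    v₁ * Matrix.of ab.1))) *
              v₁.det ^ r)) =
      if ∃ X : Matrix (Fin m) (Fin r) ℤ,
          (R₁ - R₁').map (Int.cast : ℤ → ℝ) = X.map (Int.cast : ℤ → ℝ) * ((2 : ℝ) • M) then
        Complex.ofReal (v₁.det ^ ((r : ℝ) / 2) * ((4 : ℝ) • M).det ^ (-((m : ℝ) / 2)))
      else 0 := by

  obtain ⟨hsym, hMpos, -, hhalf⟩ := hM
  have hs : Mᵀ = M := hsym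
  have hdet := hMpos.det_pos.ne'
  have hvd := hv₁pos.det_pos.ne'
  have hvs : v₁ᵀ = v₁ := by
    rw [hv₁, ← Matrix.transpose_map, hτ]
  choose n hn using hhalf
  obtain ⟨N, hN⟩ : ∃ N : Matrix (Fin r) (Fin r) ℤ,
      N.map (Int.cast : ℤ → ℝ) = (2 : ℝ) • M :=
    ⟨Matrix.of n, by ext i j; simp [hn i j]⟩
  obtain ⟨c, hc⟩ : ∃ c, c = (1/2 : ℂ) • (z'₁ * (R₂.map fun n : ℤ => (n : ℂ)) *
    (M⁻¹.map Complex.ofReal)) := ⟨_, rfl⟩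
  obtain ⟨d, hd⟩ : ∃ d, d = (1/2 : ℝ) • (y'₁ * R₂.map (Int.cast : ℤ → ℝ) * M⁻¹) := ⟨_, rfl⟩
  have hcd : c.map Complex.im = d := by
    have hhalf' : ((1/2 : ℂ)) = ((1/2 : ℝ) : ℂ) := by push_cast; rfl
    rw [hc, hd, hhalf']
    ext i j
    simp only [Matrix.map_apply, Matrix.smul_apply, smul_eq_mul, Complex.im_ofReal_mul,
      Matrix.mul_apply, Complex.im_sum, hy'₁, Complex.im_mul_ofReal]
    simp
  have key := main_aux hMpos hs hN hv₁ hv₁pos hvs hcd R₁ R₁'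
  have hstep : (∫ ab : (Fin m → Fin r → ℝ) × (Fin m → Fin r → ℝ) in bx m r ×ˢ bx m r,
      theta M R₁ τ₁ (wz c τ₁ ab.1 + (Matrix.of ab.2).map Complex.ofReal) *
      (starRingEnd ℂ) (theta M R₁' τ₁ (wz c τ₁ ab.1 + (Matrix.of ab.2).map Complex.ofReal)) *
      Complex.ofReal (Real.exp (-4 * Real.pi * Wt M v₁ d ab.1) * v₁.det ^ r)) =
      if ∃ X : Matrix (Fin m) (Fin r) ℤ,
          (R₁ - R₁').map (Int.cast : ℤ → ℝ) = X.map (Int.cast : ℤ → ℝ) * ((2 : ℝ) • M) then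
        Complex.ofReal (v₁.det ^ ((r : ℝ) / 2) * ((4 : ℝ) • M).det ^ (-((m : ℝ) / 2)))
      else 0 := by
    rw [← key.tsum_eq]
    split_ifs with hX
    · obtain ⟨X₀, hX₀⟩ := hX
      rw [← hN, ← intmap_mul] at hX₀
      replace hX₀ := intmap_inj hX₀
      have hiff : ∀ X Y : Matrix (Fin m) (Fin r) ℤ,
          (R₁ + X * N) - (R₁' + Y * N) = 0 ↔ Y = X + X₀ := by
        intro X Y
        rw [sub_eq_zero]
        have hR : R₁ = R₁' + X₀ * N := by rw [← hX₀]; abel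
        rw [hR]
        constructor
        · intro h
          apply N_cancel hdet hN
          rw [Matrix.add_mul]
          have := add_left_cancel ((add_assoc _ _ _).symm.trans h)
          rw [← this, add_comm]
        · rintro rfl
          rw [Matrix.add_mul]; abel
      rw [key.summable.tsum_prod]
      obtain ⟨g1, g2⟩ := gauss_Q (m := m) (r := r) hv₁pos hMpos
      obtain ⟨s, hsdef⟩ : ∃ s : Fin m → Fin r → ℝ, Matrix.of s =
        v₁⁻¹ * d + (1/2 : ℝ) • (R₁.map (Int.cast : ℤ → ℝ) * M⁻¹) :=
        ⟨fun i j => (v₁⁻¹ * d + (1/2 : ℝ) • (R₁.map (Int.cast : ℤ → ℝ) * M⁻¹)) i j, rfl⟩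
      have ht := tiling (g1.comp_add_right s)
      rw [integral_add_right_eq_self
        (fun x : Fin m → Fin r → ℝ => Real.exp (-(4 * Real.pi) * Qf v₁ M (Matrix.of x))) s] at ht
      rw [← g2, ← ht, ← tsum_mul_right, Complex.ofReal_tsum]
      congr 1
      ext X
      rw [tsum_eq_single (X + X₀)]
      · have h0 := (hiff X (X + X₀)).mpr rfl
        simp only [h0, if_true, mul_one]
        rw [sub_eq_zero] at h0
        rw [← h0, ← integral_mul_const, ← integral_complex_ofReal]
        congr 1
        ext a
        rw [normSq_key hdet hs hN hv₁ hvd hvs hcd, ← hsdef]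
        congr 5
        ext i j
        simp [Matrix.of_apply]
        ring
      · intro Y hY
        have : ¬ ((R₁ + X * N) - (R₁' + Y * N) = 0) := fun h => hY ((hiff X Y).mp h)
        simp only [this, if_false, mul_zero]
    · refine (tsum_congr fun XY => ?_).trans tsum_zero
      rw [if_neg, mul_zero]
      intro h
      apply hX
      refine ⟨XY.2 - XY.1, ?_⟩
      rw [← hN, ← intmap_mul]
      congr 1
      rw [Matrix.sub_mul]
      rw [sub_eq_zero] at h
      rw [sub_eq_sub_iff_add_eq_add, h, add_comm]
  rw [← hstep]
  simp only [thetaShift, ← hc, ← hd, ← add_assoc]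
  rfl
end

section
/- Let t ≥ 1, r ≥ 1 and M ∈ L_r^+, and let l be the smallest positive integer such that 2l·(2M)⁻¹ has integer entries. Fix T ∈ L_t^+. Let S be a subset of L_{t,r}^+(M) such that (i) distinct elements of S lie in distinct B_{t,r}(ℤ)-orbits, and (ii) every N = [[N₂, (1/2)R₂],[(1/2)R₂ᵀ, M]] ∈ S satisfies γ₁·(4l·N₂ - l·R₂M⁻¹R₂ᵀ)·γ₁ᵀ = T for some γ₁ ∈ GL_t(ℤ). Then S is finite and has at most det(2M)^{t} elements. -/
open Matrix

/-- Membership in `L_{t,r}^+(M)`: positive definite half-integral matrices of the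
block form `[[N₂, (1/2)R₂],[(1/2)R₂ᵀ, M]]` with `N₂ ∈ L_t^+` and `R₂` integral. -/
def LtrPlus (t r : ℕ) (M : Matrix (Fin r) (Fin r) ℝ) :
    Set (Matrix (Fin t ⊕ Fin r) (Fin t ⊕ Fin r) ℝ) :=
  {N | ∃ N₂ : Matrix (Fin t) (Fin t) ℝ, ∃ R₂ : Matrix (Fin t) (Fin r) ℝ,
    LPlus N₂ ∧ IsIntegerMatrix R₂ ∧
    N = Matrix.fromBlocks N₂ ((1/2 : ℝ) • R₂) ((1/2 : ℝ) • R₂ᵀ) M ∧ LPlus N}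

/-- Membership in `B_{t,r}(ℤ)` (viewed inside real matrices): `γ = [[γ₁,γ₂],[0,1]]`
with `γ₁ ∈ GL_t(ℤ)` and `γ₂` an integer matrix. -/
def InBtr (t r : ℕ) (γ : Matrix (Fin t ⊕ Fin r) (Fin t ⊕ Fin r) ℝ) : Prop :=
  ∃ γ₁ : Matrix (Fin t) (Fin t) ℝ, ∃ γ₂ : Matrix (Fin t) (Fin r) ℝ,
    IsIntegerMatrix γ₁ ∧ (γ₁.det = 1 ∨ γ₁.det = -1) ∧ IsIntegerMatrix γ₂ ∧
    γ = Matrix.fromBlocks γ₁ γ₂ (0 : Matrix (Fin r) (Fin t) ℝ) (1 : Matrix (Fin r) (Fin r) ℝ)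

theorem aux_card {r : ℕ} (A : Matrix (Fin r) (Fin r) ℤ) (h : A.det ≠ 0) :
    Nat.card ((Fin r → ℤ) ⧸ LinearMap.range (Matrix.toLin' A)) = A.det.natAbs := by
  have hinj : Function.Injective (Matrix.toLin' A) := by
    have := Matrix.mulVec_injective_of_isUnit (A := A.map (Int.cast : ℤ → ℚ)) (by
      rw [Matrix.isUnit_iff_isUnit_det, isUnit_iff_ne_zero]
      have : (A.map (Int.cast : ℤ → ℚ)).det = (A.det : ℚ) := by
        exact ((Int.castRingHom ℚ).map_det A).symm
      rw [this]; exact_mod_cast h)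
    intro x y hxy
    have h2 : (A.map (Int.cast : ℤ → ℚ)) *ᵥ (fun i => (x i : ℚ)) =
        (A.map (Int.cast : ℤ → ℚ)) *ᵥ (fun i => (y i : ℚ)) := by
      ext i
      have := congrFun hxy i
      simp only [Matrix.toLin'_apply, Matrix.mulVec, dotProduct] at this
      simp only [Matrix.mulVec, dotProduct, Matrix.map_apply]
      exact_mod_cast this
    have h3 := this h2
    ext i
    have := congrFun h3 i
    exact_mod_cast this
  have e := Submodule.natAbs_det_equiv (LinearMap.range (Matrix.toLin' A))
    (LinearEquiv.ofInjective _ hinj)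
  rw [← e, ← LinearMap.det_toLin' A]
  congr 1

theorem aux_int {ι κ : Type*} {A : Matrix ι κ ℝ} (h : IsIntegerMatrix A) :
    ∃ Z : Matrix ι κ ℤ, A = Z.map (Int.cast : ℤ → ℝ) := by
  choose Z hZ using h
  exact ⟨Matrix.of Z, by ext i j; simp [hZ]⟩

theorem aux_int_map {ι κ : Type*} (Z : Matrix ι κ ℤ) :
    IsIntegerMatrix (Z.map (Int.cast : ℤ → ℝ)) := fun i j => ⟨Z i j, rfl⟩

theorem aux_map_mul {ι κ μ : Type*} [Fintype κ] (Y : Matrix ι κ ℤ) (Z : Matrix κ μ ℤ) :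
    (Y * Z).map (Int.cast : ℤ → ℝ) = Y.map (Int.cast : ℤ → ℝ) * Z.map (Int.cast : ℤ → ℝ) :=
  Matrix.map_mul (f := Int.castRingHom ℝ)

theorem aux_det {t : ℕ} (G : Matrix (Fin t) (Fin t) ℤ)
    (h : (G.map (Int.cast : ℤ → ℝ)).det = 1 ∨ (G.map (Int.cast : ℤ → ℝ)).det = -1) :
    IsUnit G.det := by
  have : (G.map (Int.cast : ℤ → ℝ)).det = (G.det : ℝ) := ((Int.castRingHom ℝ).map_det G).symm
  rw [this] at h
  rw [Int.isUnit_iff]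
  exact_mod_cast h

theorem aux_det' {t : ℕ} (G : Matrix (Fin t) (Fin t) ℤ) (h : IsUnit G.det) :
    (G.map (Int.cast : ℤ → ℝ)).det = 1 ∨ (G.map (Int.cast : ℤ → ℝ)).det = -1 := by
  have : (G.map (Int.cast : ℤ → ℝ)).det = (G.det : ℝ) := ((Int.castRingHom ℝ).map_det G).symm
  rw [this]
  rw [Int.isUnit_iff] at h
  exact_mod_cast h

theorem aux_core {t r : ℕ} (M : Matrix (Fin r) (Fin r) ℝ) (hs : Mᵀ = M) (hu : IsUnit M.det)
    (l : ℝ) (hl : l ≠ 0) (N₂ N₂' g g' h' : Matrix (Fin t) (Fin t) ℝ)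
    (R R' X : Matrix (Fin t) (Fin r) ℝ) (hh : h' * g' = 1)
    (hX : g' * R' = g * R + (2 : ℝ) • (X * M))
    (hT : g * ((4 * l) • N₂ - l • (R * M⁻¹ * Rᵀ)) * gᵀ =
      g' * ((4 * l) • N₂' - l • (R' * M⁻¹ * R'ᵀ)) * g'ᵀ) :
    fromBlocks (h' * g) (h' * X) (0 : Matrix (Fin r) (Fin t) ℝ) (1 : Matrix (Fin r) (Fin r) ℝ) *
      fromBlocks N₂ ((1/2 : ℝ) • R) ((1/2 : ℝ) • Rᵀ) M *
      (fromBlocks (h' * g) (h' * X) (0 : Matrix (Fin r) (Fin t) ℝ)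
        (1 : Matrix (Fin r) (Fin r) ℝ))ᵀ =
      fromBlocks N₂' ((1/2 : ℝ) • R') ((1/2 : ℝ) • R'ᵀ) M := by
  have hR : (1/2 : ℝ) • R' = h' * (g * ((1/2 : ℝ) • R) + X * M) := by
    have : g * ((1/2 : ℝ) • R) + X * M = (1/2 : ℝ) • (g' * R') := by
      rw [hX, smul_add, smul_smul]; norm_num
    rw [this, Matrix.mul_smul, ← Matrix.mul_assoc, hh, Matrix.one_mul]
  have hRt : (1/2 : ℝ) • R'ᵀ = ((1/2 : ℝ) • Rᵀ * gᵀ + M * Xᵀ) * h'ᵀ := by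
    have := congrArg Matrix.transpose hR
    simpa [Matrix.transpose_smul, Matrix.transpose_mul, hs] using this
  have hQ : g' * (R' * M⁻¹ * R'ᵀ) * g'ᵀ = g * (R * M⁻¹ * Rᵀ) * gᵀ + (2 : ℝ) • (X * Rᵀ * gᵀ)
      + (2 : ℝ) • (g * R * Xᵀ) + (4 : ℝ) • (X * M * Xᵀ) := by
    have e : g' * (R' * M⁻¹ * R'ᵀ) * g'ᵀ = (g' * R') * M⁻¹ * (g' * R')ᵀ := by
      simp only [Matrix.transpose_mul, Matrix.mul_assoc]
    have i1 : M * M⁻¹ = 1 := Matrix.mul_nonsing_inv _ hu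
    have i2 : ∀ Y : Matrix (Fin r) (Fin t) ℝ, M * (M⁻¹ * Y) = Y := fun Y => by
      rw [← Matrix.mul_assoc, i1, Matrix.one_mul]
    have i3 : ∀ Y : Matrix (Fin r) (Fin t) ℝ, M⁻¹ * (M * Y) = Y := fun Y => by
      rw [← Matrix.mul_assoc, Matrix.nonsing_inv_mul _ hu, Matrix.one_mul]
    rw [e, hX]
    simp only [Matrix.transpose_mul, Matrix.transpose_add, Matrix.transpose_smul, hs,
      Matrix.mul_assoc, Matrix.mul_add, Matrix.add_mul, Matrix.mul_smul, Matrix.smul_mul, i2, i3,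
      smul_add, smul_smul]
    norm_num
    abel
  have hN : g' * N₂' * g'ᵀ = g * N₂ * gᵀ + (1/2 : ℝ) • (X * Rᵀ * gᵀ)
      + (1/2 : ℝ) • (g * R * Xᵀ) + X * M * Xᵀ := by
    simp only [Matrix.mul_sub, Matrix.sub_mul, Matrix.mul_smul, Matrix.smul_mul, hQ] at hT
    ext i j
    have := congrFun (congrFun hT i) j
    simp only [Matrix.sub_apply, Matrix.add_apply, Matrix.smul_apply, smul_eq_mul] at this ⊢
    apply mul_left_cancel₀ (mul_ne_zero four_ne_zero hl)
    linear_combination -this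
  have hN' : N₂' = h' * (g' * N₂' * g'ᵀ) * h'ᵀ := by
    have hh2 : g'ᵀ * h'ᵀ = 1 := by rw [← Matrix.transpose_mul, hh, Matrix.transpose_one]
    calc N₂' = (h' * g') * N₂' * (g'ᵀ * h'ᵀ) := by rw [hh, hh2]; simp
      _ = _ := by simp only [Matrix.mul_assoc]
  rw [Matrix.fromBlocks_transpose, Matrix.fromBlocks_multiply, Matrix.fromBlocks_multiply]
  congr 1
  · rw [hN', hN]
    simp only [Matrix.transpose_mul,
      Matrix.mul_assoc, Matrix.mul_add, Matrix.add_mul, Matrix.mul_smul, Matrix.smul_mul]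
    abel
  · rw [hR]
    simp [Matrix.mul_assoc, Matrix.mul_add]
  · rw [hRt]
    simp [Matrix.mul_assoc, Matrix.add_mul]
  · simp

/-- fiber counting in the proof of Lemma 2.2: at most `det(2M)^t`
`B_{t,r}(ℤ)`-orbits of `L_{t,r}^+(M)` map to a given `GL_t(ℤ)`-class `T` under
`N ↦ 4lN₂ - lR₂M⁻¹R₂ᵀ`, where `l` is the smallest positive integer with
`2l(2M)⁻¹` integral. -/
theorem fiber_count_le_det_pow {t r : ℕ} (ht : 1 ≤ t) (hr : 1 ≤ r)
    (M : Matrix (Fin r) (Fin r) ℝ) (hM : LPlus M)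
    (l : ℕ) (hl : 0 < l)
    (hlint : IsIntegerMatrix ((2 * (l : ℝ)) • ((2 : ℝ) • M)⁻¹))
    (hlmin : ∀ l' : ℕ, 0 < l' →
      IsIntegerMatrix ((2 * (l' : ℝ)) • ((2 : ℝ) • M)⁻¹) → l ≤ l')
    (T : Matrix (Fin t) (Fin t) ℝ) (hT : LPlus T)
    (S : Set (Matrix (Fin t ⊕ Fin r) (Fin t ⊕ Fin r) ℝ))
    (hS : S ⊆ LtrPlus t r M)
    (horb : ∀ N ∈ S, ∀ N' ∈ S, N ≠ N' → ∀ γ, InBtr t r γ → γ * N * γᵀ ≠ N')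
    (hfib : ∀ N ∈ S, ∃ γ₁ : Matrix (Fin t) (Fin t) ℝ,
      IsIntegerMatrix γ₁ ∧ (γ₁.det = 1 ∨ γ₁.det = -1) ∧
      γ₁ * ((4 * (l : ℝ)) • N.toBlocks₁₁ -
          (l : ℝ) • (((2 : ℝ) • N.toBlocks₁₂) * M⁻¹ * ((2 : ℝ) • N.toBlocks₁₂)ᵀ)) * γ₁ᵀ = T) :
    S.Finite ∧ (S.ncard : ℝ) ≤ ((2 : ℝ) • M).det ^ t := by
  obtain ⟨hMs, hMp, hMh⟩ := hM
  have hMdet : 0 < M.det := hMp.det_pos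
  obtain ⟨A, hA⟩ := aux_int (A := (2 : ℝ) • M) (fun i j => by simpa using hMh.2 i j)
  have hAdet : ((2 : ℝ) • M).det = (A.det : ℝ) := by
    rw [hA]; exact ((Int.castRingHom ℝ).map_det A).symm
  have hApos : 0 < A.det := by
    have : 0 < ((2 : ℝ) • M).det := by rw [Matrix.det_smul]; positivity
    rw [hAdet] at this; exact_mod_cast this
  have hAs : Aᵀ = A := by
    have h1 : ((2 : ℝ) • M)ᵀ = (2 : ℝ) • M := by rw [Matrix.transpose_smul, hMs]
    rw [hA] at h1
    ext i j
    have := congrFun (congrFun h1 i) j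
    simp only [Matrix.transpose_apply, Matrix.map_apply] at this ⊢
    exact_mod_cast this
  have key : ∀ N : S, ∃ N₂ : Matrix (Fin t) (Fin t) ℝ, ∃ Z : Matrix (Fin t) (Fin r) ℤ,
      ∃ G : Matrix (Fin t) (Fin t) ℤ, IsUnit G.det ∧
      (N : Matrix _ _ ℝ) = fromBlocks N₂ ((1/2 : ℝ) • Z.map (Int.cast : ℤ → ℝ))
        ((1/2 : ℝ) • (Z.map (Int.cast : ℤ → ℝ))ᵀ) M ∧
      G.map (Int.cast : ℤ → ℝ) * ((4 * (l : ℝ)) • N₂ - (l : ℝ) •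
        (Z.map (Int.cast : ℤ → ℝ) * M⁻¹ * (Z.map (Int.cast : ℤ → ℝ))ᵀ)) *
        (G.map (Int.cast : ℤ → ℝ))ᵀ = T := by
    rintro ⟨N, hN⟩
    obtain ⟨N₂, R, -, hR, hNe, -⟩ := hS hN
    obtain ⟨g, hg, hgd, hgT⟩ := hfib N hN
    obtain ⟨Z, rfl⟩ := aux_int hR
    obtain ⟨G, rfl⟩ := aux_int hg
    refine ⟨N₂, Z, G, aux_det G hgd, hNe, ?_⟩
    rw [hNe, Matrix.toBlocks_fromBlocks₁₁, Matrix.toBlocks_fromBlocks₁₂, smul_smul] at hgT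
    norm_num at hgT
    exact hgT
  choose N₂ Z G hG hN hT' using key
  have hcard := aux_card A hApos.ne'
  have : Finite ((Fin r → ℤ) ⧸ LinearMap.range (Matrix.toLin' A)) := by
    apply Nat.finite_of_card_ne_zero
    rw [hcard]; exact Int.natAbs_ne_zero.mpr hApos.ne'
  let f : S → (Fin t → ((Fin r → ℤ) ⧸ LinearMap.range (Matrix.toLin' A))) :=
    fun N i => Submodule.Quotient.mk ((G N * Z N) i)
  have hf : Function.Injective f := by
    intro N N' hNN
    by_contra hne
    have hx : ∀ i, ∃ x : Fin r → ℤ, A *ᵥ x = (G N' * Z N') i - (G N * Z N) i := by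
      intro i
      have h1 := (Submodule.Quotient.eq _).1 (congrFun hNN i).symm
      obtain ⟨x, hx⟩ := h1
      exact ⟨x, by rw [← hx, Matrix.toLin'_apply]⟩
    choose X hX using hx
    have hXe : G N' * Z N' = G N * Z N + Matrix.of X * A := by
      ext i j
      have h1 := congrFun (hX i) j
      have h2 : (Matrix.of X * A) i j = (A *ᵥ X i) j := by
        rw [← congrFun (Matrix.vecMul_transpose A (X i)) j, hAs]; rfl
      rw [Matrix.add_apply, h2, h1, Pi.sub_apply]; ring
    have hinv : (G N')⁻¹ * G N' = 1 := Matrix.nonsing_inv_mul _ (hG N')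
    have hco := aux_core M hMs hMdet.ne'.isUnit (l : ℝ) (by positivity) (N₂ N) (N₂ N')
      ((G N).map (Int.cast : ℤ → ℝ)) ((G N').map (Int.cast : ℤ → ℝ))
      ((G N')⁻¹.map (Int.cast : ℤ → ℝ)) ((Z N).map (Int.cast : ℤ → ℝ))
      ((Z N').map (Int.cast : ℤ → ℝ)) ((Matrix.of X).map (Int.cast : ℤ → ℝ))
      (by rw [← aux_map_mul, hinv]; simp)
      (by
        rw [← Matrix.mul_smul, hA, ← aux_map_mul, ← aux_map_mul, ← aux_map_mul, hXe]
        ext i j; simp)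
      (by rw [hT', hT'])
    rw [← hN, ← hN] at hco
    refine horb N N.2 N' N'.2 (fun h => hne (Subtype.ext h)) _ ⟨_, _, ?_, ?_, ?_, rfl⟩ hco
    · rw [← aux_map_mul]; exact aux_int_map _
    · rw [← aux_map_mul]; apply aux_det'
      rw [Matrix.det_mul]
      exact (Matrix.isUnit_nonsing_inv_det _ (hG N')).mul (hG N)
    · rw [← aux_map_mul]; exact aux_int_map _
  have hfin : Finite S := Finite.of_injective f hf
  refine ⟨Set.toFinite S, ?_⟩
  have hle := Nat.card_le_card_of_injective f hf
  rw [Nat.card_fun, hcard, Nat.card_coe_set_eq, Nat.card_fin] at hle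
  rw [hAdet]
  have h3 : (A.det : ℝ) = (A.det.natAbs : ℝ) := by
    rw [Nat.cast_natAbs, abs_of_pos hApos]
  rw [h3]
  exact_mod_cast hle
end
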